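/- arXiv:1803.00979 — 2 statements merged into one kernel-verified Lean document; each statement's English description precedes it below -/
import Mathlib

section
/- For every integer n with 4 ≤ n ≤ 6 and every integer d ≥ 2, there exists an elastic collision system of n unit balls in ℝ^d on the time interval ℝ whose number of collisions is at least 1 + n(n−1)/2. (Hence K(n,d) ≥ K(n,2) ≥ 1 + n(n−1)/2.) -/
open scoped RealInnerProductSpace

noncomputable section

/-- An elastic collision system of unit balls in `ℝ^d`, indexed by `ι`, on the time
interval `I ⊆ ℝ`.  `x i` is the trajectory of the center of ball `i`, `vr i t` its right
derivative (velocity) at time `t` and `vl i t` its left derivative (which, for a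
continuous piecewise linear trajectory, is the left limit of the right derivative).
Fields `right_lin` and `left_lin` say that each trajectory is (locally) linear to the
right and to the left of every time, with the indicated one-sided derivatives; this
encodes continuity and piecewise linearity with locally finitely many breakpoints.
`dist_ge` says the closed unit balls have disjoint interiors, and `collision_rule` is
the elastic collision rule: whenever the right derivative of `x i` changes at a time `t`
(having a left limit in `I`), there is exactly one `j ≠ i` with `‖x i t - x j t‖ = 2`,
the velocity of `x j` also changes at `t`, no other velocity changes at `t`, and with
`u = (x i t - x j t)/2` the usual exchange of normal velocity components holds. -/
structure BallSystem (ι : Type) (d : ℕ) (I : Set ℝ) where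
  x : ι → ℝ → EuclideanSpace ℝ (Fin d)
  vr : ι → ℝ → EuclideanSpace ℝ (Fin d)
  vl : ι → ℝ → EuclideanSpace ℝ (Fin d)
  right_lin : ∀ i, ∀ t ∈ I, ∃ ε > 0, ∀ s ∈ Set.Icc t (t + ε) ∩ I,
    x i s = x i t + (s - t) • vr i t
  left_lin : ∀ i, ∀ t ∈ I, ∃ ε > 0, ∀ s ∈ Set.Icc (t - ε) t ∩ I,
    x i s = x i t + (s - t) • vl i t
  dist_ge : ∀ i j, i ≠ j → ∀ t ∈ I, 2 ≤ ‖x i t - x j t‖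
  collision_rule : ∀ i, ∀ t ∈ I, (∃ s ∈ I, s < t) → vr i t ≠ vl i t →
    ∃ j, j ≠ i ∧ ‖x i t - x j t‖ = 2 ∧ vr j t ≠ vl j t ∧
      (∀ k, k ≠ i → ‖x i t - x k t‖ = 2 → k = j) ∧
      (∀ k, k ≠ i → k ≠ j → vr k t = vl k t) ∧
      vr i t = vl i t -
        ⟪vl i t - vl j t, (2⁻¹ : ℝ) • (x i t - x j t)⟫ • ((2⁻¹ : ℝ) • (x i t - x j t)) ∧
      vr j t = vl j t +
        ⟪vl i t - vl j t, (2⁻¹ : ℝ) • (x i t - x j t)⟫ • ((2⁻¹ : ℝ) • (x i t - x j t))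

/-- The set of collisions of the system: pairs `(t, {i,j})` such that at time `t` the
balls `i` and `j` are tangent and both of their velocities change at `t`. -/
def BallSystem.collisions {ι : Type} [DecidableEq ι] {d : ℕ} {I : Set ℝ}
    (S : BallSystem ι d I) : Set (ℝ × Finset ι) :=
  {p | p.1 ∈ I ∧ (∃ s ∈ I, s < p.1) ∧ ∃ i j : ι, i ≠ j ∧ p.2 = {i, j} ∧
    ‖S.x i p.1 - S.x j p.1‖ = 2 ∧ S.vr i p.1 ≠ S.vl i p.1 ∧ S.vr j p.1 ≠ S.vl j p.1}

/-- `n1 = ⌊n/3⌋`. -/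
def nOne (n : ℕ) : ℕ := n / 3

/-- `n2 = n - 2 n1`. -/
def nTwo (n : ℕ) : ℕ := n - 2 * (n / 3)

/-- `f(n) = n1 (n1+1) n2 + n2 (n2-1)/2 + n1 (n1-1)`. -/
def f (n : ℕ) : ℕ :=
  nOne n * (nOne n + 1) * nTwo n + nTwo n * (nTwo n - 1) / 2 + nOne n * (nOne n - 1)

end
/-- The system on `J` that moves with the constant velocities `w` up to the time `t₁` and
continues as `S` afterwards. -/
noncomputable def BallSystem.prepend {ι : Type} {d : ℕ} {t₁ : ℝ} (S : BallSystem ι d (Set.Ici t₁))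
    (w : ι → EuclideanSpace ℝ (Fin d)) (J : Set ℝ)
    (hdist : ∀ i j, i ≠ j → ∀ t ∈ J, t ≤ t₁ →
      2 ≤ ‖(S.x i t₁ + (t - t₁) • w i) - (S.x j t₁ + (t - t₁) • w j)‖)
    (hrule : ∀ i, S.vr i t₁ ≠ w i →
      ∃ j, j ≠ i ∧ ‖S.x i t₁ - S.x j t₁‖ = 2 ∧ S.vr j t₁ ≠ w j ∧
        (∀ k, k ≠ i → ‖S.x i t₁ - S.x k t₁‖ = 2 → k = j) ∧
        (∀ k, k ≠ i → k ≠ j → S.vr k t₁ = w k) ∧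
        S.vr i t₁ = w i - ⟪w i - w j, (2⁻¹ : ℝ) • (S.x i t₁ - S.x j t₁)⟫ •
          ((2⁻¹ : ℝ) • (S.x i t₁ - S.x j t₁)) ∧
        S.vr j t₁ = w j + ⟪w i - w j, (2⁻¹ : ℝ) • (S.x i t₁ - S.x j t₁)⟫ •
          ((2⁻¹ : ℝ) • (S.x i t₁ - S.x j t₁))) :
    BallSystem ι d J where
  x i t := if t ≤ t₁ then S.x i t₁ + (t - t₁) • w i else S.x i t
  vr i t := if t < t₁ then w i else S.vr i t
  vl i t := if t ≤ t₁ then w i else S.vl i t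
  right_lin i t _ := by
    rcases lt_or_ge t t₁ with h | h
    · refine ⟨t₁ - t, sub_pos.2 h, fun s hs => ?_⟩
      have hs' : s ≤ t₁ := by linarith [hs.1.2]
      simp only [hs', h, h.le, if_true]
      module
    · obtain ⟨ε, hε, H⟩ := S.right_lin i t h
      refine ⟨ε, hε, fun s hs => ?_⟩
      have key : ∀ r, t₁ ≤ r →
          (if r ≤ t₁ then S.x i t₁ + (r - t₁) • w i else S.x i r) = S.x i r := by
        intro r hr
        split_ifs with h'
        · obtain rfl : r = t₁ := le_antisymm h' hr
          simp
        · rfl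
      rw [key s (h.trans hs.1.1), key t h, if_neg h.not_gt]
      exact H s ⟨hs.1, h.trans hs.1.1⟩
  left_lin i t _ := by
    rcases le_or_gt t t₁ with h | h
    · refine ⟨1, one_pos, fun s hs => ?_⟩
      have hs' : s ≤ t₁ := hs.1.2.trans h
      simp only [hs', h, if_true]
      module
    · obtain ⟨ε, hε, H⟩ := S.left_lin i t h.le
      refine ⟨min ε ((t - t₁) / 2), lt_min hε (by linarith), fun s hs => ?_⟩
      have hs₁ := hs.1.1
      have hs' : t₁ < s := by linarith [min_le_right ε ((t - t₁) / 2)]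
      simp only [hs'.not_ge, h.not_ge, if_false]
      exact H s ⟨⟨by linarith [min_le_left ε ((t - t₁) / 2)], hs.1.2⟩, hs'.le⟩
  dist_ge i j hij t ht := by
    rcases le_or_gt t t₁ with h | h
    · simpa only [h, if_true] using hdist i j hij t ht h
    · simpa only [h.not_ge, if_false] using S.dist_ge i j hij t h.le
  collision_rule i t _ _ hne := by
    rcases lt_trichotomy t t₁ with h | h | h
    · simp [h, h.le] at hne
    · subst h
      simpa using hrule i (by simpa using hne)
    · simp only [h.not_ge, h.not_gt, if_false] at hne ⊢
      exact S.collision_rule i t h.le ⟨t₁, Set.self_mem_Ici, h⟩ hne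

theorem BallSystem.collisions_subset_prepend {ι : Type} [DecidableEq ι] {d : ℕ} {t₁ : ℝ}
    (S : BallSystem ι d (Set.Ici t₁)) (w : ι → EuclideanSpace ℝ (Fin d)) (J : Set ℝ)
    (hdist hrule) (hJ : Set.Ici t₁ ⊆ J) :
    S.collisions ⊆ (S.prepend w J hdist hrule).collisions := by
  rintro ⟨t, P⟩ ⟨ht, ⟨s, hs, hst⟩, i, j, hij, hP, H⟩
  have h : t₁ < t := lt_of_le_of_lt hs hst
  refine ⟨hJ ht, ⟨s, hJ hs, hst⟩, i, j, hij, hP, ?_⟩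
  simpa only [BallSystem.prepend, h.not_ge, h.not_gt, if_false] using H

/-- Position `(x, y)` and velocity `(u, v)` of a point in the plane. -/
structure Phase (α : Type) where
  x : α
  y : α
  u : α
  v : α

namespace Phase

section Operations

variable {α : Type} [Add α] [Sub α] [Mul α]

def rel (a b : Phase α) : Phase α := ⟨a.x - b.x, a.y - b.y, a.u - b.u, a.v - b.v⟩

def distSq (p : Phase α) : α := p.x * p.x + p.y * p.y

def radial (p : Phase α) : α := p.x * p.u + p.y * p.v

def speedSq (p : Phase α) : α := p.u * p.u + p.v * p.v

def cross (p : Phase α) : α := p.x * p.v - p.y * p.u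

def advance (τ : α) (p : Phase α) : Phase α := ⟨p.x + τ * p.u, p.y + τ * p.v, p.u, p.v⟩

/-- With `κ = 1/4` and `p` the relative phase of two touching unit balls, `κ * radial p`
times the relative position is the change of velocity in their collision. -/
def loseImpulse (κ : α) (p a : Phase α) : Phase α :=
  ⟨a.x, a.y, a.u - κ * p.radial * p.x, a.v - κ * p.radial * p.y⟩

def gainImpulse (κ : α) (p a : Phase α) : Phase α :=
  ⟨a.x, a.y, a.u + κ * p.radial * p.x, a.v + κ * p.radial * p.y⟩

/-- The phases after free motion for the time `τ`, followed by a collision of the balls `i`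
and `j`. -/
def collide {n : ℕ} (κ τ : α) (i j : Fin n) (Q : Fin n → Phase α) (k : Fin n) : Phase α :=
  if k = i then loseImpulse κ (rel (advance τ (Q i)) (advance τ (Q j))) (advance τ (Q i))
  else if k = j then gainImpulse κ (rel (advance τ (Q i)) (advance τ (Q j))) (advance τ (Q j))
  else advance τ (Q k)

end Operations

theorem speedSq_nonneg (p : Phase ℝ) : 0 ≤ p.speedSq :=
  add_nonneg (mul_self_nonneg _) (mul_self_nonneg _)

theorem distSq_advance (τ s : ℝ) (p : Phase ℝ) : (advance s p).distSq =
    (advance τ p).distSq + 2 * (s - τ) * (advance τ p).radial + (s - τ) ^ 2 * p.speedSq := by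
  simp only [distSq, radial, speedSq, advance]
  ring

theorem radial_advance (s : ℝ) (p : Phase ℝ) :
    (advance s p).radial = p.radial + s * p.speedSq := by
  simp only [radial, speedSq, advance]
  ring

theorem advance_zero (p : Phase ℝ) : advance 0 p = p := by
  simp [advance]

theorem rel_advance (s : ℝ) (a b : Phase ℝ) :
    rel (advance s a) (advance s b) = advance s (rel a b) := by
  simp only [rel, advance, mk.injEq]
  exact ⟨by ring, by ring, trivial, trivial⟩

theorem distSq_rel_comm (a b : Phase ℝ) : (rel a b).distSq = (rel b a).distSq := by
  simp only [rel, distSq]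
  ring

theorem lt_distSq_advance_of_leaving {p : Phase ℝ} (h : 4 ≤ p.distSq) (hr : 0 < p.radial)
    {s : ℝ} (hs : 0 < s) : 4 < (advance s p).distSq := by
  rw [distSq_advance 0 s, advance_zero]
  have := mul_pos hs hr
  have := mul_nonneg (sq_nonneg (s - 0)) p.speedSq_nonneg
  linarith

theorem le_distSq_advance_of_approaching {p : Phase ℝ} {τ s c : ℝ}
    (h : c ≤ (advance τ p).distSq) (hr : (advance τ p).radial < 0) (hs : s ≤ τ) :
    c ≤ (advance s p).distSq := by
  rw [distSq_advance τ s]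
  have := mul_nonneg (sub_nonneg.2 hs) (neg_nonneg.2 hr.le)
  have := mul_nonneg (sq_nonneg (s - τ)) p.speedSq_nonneg
  linarith

theorem lt_distSq_advance_of_cross {p : Phase ℝ} (h : 4 * p.speedSq < p.cross * p.cross)
    (s : ℝ) : 4 < (advance s p).distSq := by
  have h₁ : p.cross * p.cross ≤ (advance s p).distSq * p.speedSq := by
    have : (advance s p).distSq * p.speedSq =
        p.cross * p.cross + (advance s p).radial * (advance s p).radial := by
      simp only [distSq, radial, speedSq, cross, advance]
      ring
    linarith [mul_self_nonneg (advance s p).radial]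
  by_contra! h₂
  linarith [mul_le_mul_of_nonneg_right h₂ p.speedSq_nonneg]

theorem exists_distSq_advance_eq {p : Phase ℝ} {a b : ℝ} (hab : a ≤ b)
    (ha : 4 < (advance a p).distSq) (hb : (advance b p).distSq < 4) :
    ∃ τ ∈ Set.Icc a b, (advance τ p).distSq = 4 := by
  have hc : ContinuousOn (fun τ => (advance τ p).distSq) (Set.Icc a b) := by
    simp only [distSq, advance]
    fun_prop
  exact intermediate_value_Icc' hab hc ⟨hb.le, ha.le⟩

theorem rel_collide {n : ℕ} (κ τ : ℝ) {i j : Fin n} (hij : i ≠ j) (Q : Fin n → Phase ℝ) :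
    rel (collide κ τ i j Q i) (collide κ τ i j Q j) =
      loseImpulse (2 * κ) (advance τ (rel (Q i) (Q j))) (advance τ (rel (Q i) (Q j))) := by
  rw [collide, collide, if_pos rfl, if_neg hij.symm, if_pos rfl, ← rel_advance]
  simp only [rel, loseImpulse, gainImpulse, mk.injEq, true_and]
  constructor <;> ring

theorem distSq_rel_collide {n : ℕ} {κ : ℝ} (τ : ℝ) {i j : Fin n} (hij : i ≠ j)
    {Q : Fin n → Phase ℝ} : (rel (collide κ τ i j Q i) (collide κ τ i j Q j)).distSq =
      (advance τ (rel (Q i) (Q j))).distSq := by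
  rw [rel_collide κ τ hij]
  rfl

theorem radial_rel_collide {n : ℕ} {τ : ℝ} {i j : Fin n} (hij : i ≠ j) {Q : Fin n → Phase ℝ}
    (htouch : (advance τ (rel (Q i) (Q j))).distSq = 4) :
    (rel (collide (1 / 4) τ i j Q i) (collide (1 / 4) τ i j Q j)).radial =
      -(advance τ (rel (Q i) (Q j))).radial := by
  rw [rel_collide _ τ hij]
  generalize advance τ (rel (Q i) (Q j)) = p at htouch ⊢
  have : (loseImpulse (2 * (1 / 4)) p p).radial = p.radial - 1 / 2 * p.radial * p.distSq := by
    simp only [loseImpulse, radial, distSq]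
    ring
  rw [this, htouch]
  ring

section Embedding

variable {E : Type} [NormedAddCommGroup E] [InnerProductSpace ℝ E] (e : Fin 2 → E)

def pos (p : Phase ℝ) : E := p.x • e 0 + p.y • e 1

def vel (p : Phase ℝ) : E := p.u • e 0 + p.v • e 1

theorem pos_sub (a b : Phase ℝ) : pos e a - pos e b = pos e (rel a b) := by
  simp only [pos, rel]
  module

theorem vel_sub (a b : Phase ℝ) : vel e a - vel e b = vel e (rel a b) := by
  simp only [vel, rel]
  module

theorem pos_advance (s : ℝ) (p : Phase ℝ) : pos e (advance s p) = pos e p + s • vel e p := by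
  simp only [pos, vel, advance]
  module

theorem vel_loseImpulse (κ : ℝ) (p a : Phase ℝ) :
    vel e (loseImpulse κ p a) = vel e a - (κ * p.radial) • pos e p := by
  simp only [pos, vel, loseImpulse]
  module

theorem vel_gainImpulse (κ : ℝ) (p a : Phase ℝ) :
    vel e (gainImpulse κ p a) = vel e a + (κ * p.radial) • pos e p := by
  simp only [pos, vel, gainImpulse]
  module

variable {e}

theorem inner_combination (he : Orthonormal ℝ e) (a b c d : ℝ) :
    ⟪a • e 0 + b • e 1, c • e 0 + d • e 1⟫ = a * c + b * d := by
  have h₀ : ⟪e 0, e 0⟫ = 1 := by simp [he.1]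
  have h₁ : ⟪e 1, e 1⟫ = 1 := by simp [he.1]
  have h₂ : ⟪e 0, e 1⟫ = 0 := he.2 (by decide)
  have h₃ : ⟪e 1, e 0⟫ = 0 := he.2 (by decide)
  simp only [inner_add_left, inner_add_right, real_inner_smul_left, real_inner_smul_right,
    h₀, h₁, h₂, h₃]
  ring

theorem inner_vel_pos (he : Orthonormal ℝ e) (p : Phase ℝ) : ⟪vel e p, pos e p⟫ = p.radial := by
  rw [pos, vel, inner_combination he, radial]
  ring

theorem norm_pos_sq (he : Orthonormal ℝ e) (p : Phase ℝ) : ‖pos e p‖ ^ 2 = p.distSq := by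
  rw [← real_inner_self_eq_norm_sq, pos, inner_combination he, distSq]

theorem two_le_norm_pos (he : Orthonormal ℝ e) {p : Phase ℝ} (h : 4 ≤ p.distSq) : 2 ≤ ‖pos e p‖ := by
  rw [← norm_pos_sq he] at h
  exact le_of_sq_le_sq (by linarith) (norm_nonneg _)

theorem norm_pos_eq_two_iff (he : Orthonormal ℝ e) {p : Phase ℝ} : ‖pos e p‖ = 2 ↔ p.distSq = 4 := by
  rw [← norm_pos_sq he, ← sq_eq_sq₀ (norm_nonneg _) zero_le_two]
  norm_num

end Embedding

end Phase

section Future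

open Phase

variable {n d : ℕ}

/-- Balls with the phases `Q` at the time `t₀` can be continued to a system on `[t₀, ∞)` with
at least `N` collisions. -/
def HasFuture (e : Fin 2 → EuclideanSpace ℝ (Fin d)) (N : ℕ) (t₀ : ℝ)
    (Q : Fin n → Phase ℝ) : Prop :=
  ∃ S : BallSystem (Fin n) d (Set.Ici t₀),
    (∀ k, S.x k t₀ = pos e (Q k)) ∧ (∀ k, S.vr k t₀ = vel e (Q k)) ∧
      ∃ F : Finset (ℝ × Finset (Fin n)), ↑F ⊆ S.collisions ∧ N ≤ F.card

variable {e : Fin 2 → EuclideanSpace ℝ (Fin d)}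

theorem hasFuture_of_free (he : Orthonormal ℝ e) {Q : Fin n → Phase ℝ}
    (hsep : ∀ k l, k ≠ l → ∀ s, 0 ≤ s → 4 ≤ (advance s (rel (Q k) (Q l))).distSq) (t₀ : ℝ) :
    HasFuture e 0 t₀ Q := by
  refine ⟨{
    x := fun k t => pos e (advance (t - t₀) (Q k))
    vr := fun k _ => vel e (Q k)
    vl := fun k _ => vel e (Q k)
    right_lin := fun k t _ => ⟨1, one_pos, fun s _ => ?_⟩
    left_lin := fun k t _ => ⟨1, one_pos, fun s _ => ?_⟩
    dist_ge := fun k l hkl t ht => ?_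
    collision_rule := fun k t _ _ h => absurd rfl h }, fun k => ?_, fun k => rfl, ∅, by simp⟩
  · simp only [pos_advance]
    module
  · simp only [pos_advance]
    module
  · rw [pos_sub, rel_advance]
    exact two_le_norm_pos he (hsep k l hkl _ (sub_nonneg.2 ht))
  · simp only [sub_self, advance_zero]

theorem pos_collide (e : Fin 2 → EuclideanSpace ℝ (Fin d)) (κ τ : ℝ) (i j k : Fin n)
    (Q : Fin n → Phase ℝ) : pos e (collide κ τ i j Q k) = pos e (advance τ (Q k)) := by
  unfold collide
  split_ifs with h₁ h₂
  · subst h₁; rfl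
  · subst h₂; rfl
  · rfl

theorem hasFuture_of_collide (he : Orthonormal ℝ e) {N : ℕ} {t₀ τ : ℝ} {i j : Fin n}
    {Q : Fin n → Phase ℝ} (hij : i ≠ j) (hτ : 0 < τ)
    (h : HasFuture e N (t₀ + τ) (collide (1 / 4) τ i j Q))
    (hsep : ∀ k l, k ≠ l → ∀ s ∈ Set.Icc 0 τ, 4 ≤ (advance s (rel (Q k) (Q l))).distSq)
    (htouch : (advance τ (rel (Q i) (Q j))).distSq = 4)
    (happroach : (advance τ (rel (Q i) (Q j))).radial < 0)
    (hclear : ∀ k l, k ≠ l → (advance τ (rel (Q k) (Q l))).distSq = 4 →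
      (k = i ∧ l = j) ∨ (k = j ∧ l = i)) :
    HasFuture e (N + 1) t₀ Q := by
  obtain ⟨S, hx, hv, F, hF, hN⟩ := h
  have hx' : ∀ k l, S.x k (t₀ + τ) - S.x l (t₀ + τ) = pos e (advance τ (rel (Q k) (Q l))) := by
    intro k l
    rw [hx, hx, pos_collide, pos_collide, pos_sub, rel_advance]
  set p := advance τ (rel (Q i) (Q j)) with hp
  have hvel : vel e (Q i) - vel e (Q j) = vel e p := vel_sub e _ _
  have hvi : S.vr i (t₀ + τ) = vel e (Q i) - (1 / 4 * p.radial) • pos e p := by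
    rw [hv, collide, if_pos rfl, vel_loseImpulse, rel_advance]
    rfl
  have hvj : S.vr j (t₀ + τ) = vel e (Q j) + (1 / 4 * p.radial) • pos e p := by
    rw [hv, collide, if_neg hij.symm, if_pos rfl, vel_gainImpulse, rel_advance]
    rfl
  have hvk : ∀ k, k ≠ i → k ≠ j → S.vr k (t₀ + τ) = vel e (Q k) := by
    intro k hi hj
    rw [hv, collide, if_neg hi, if_neg hj]
    rfl
  have hne : (1 / 4 * p.radial) • pos e p ≠ 0 := by
    refine smul_ne_zero (by linarith) fun h₀ => ?_
    have := norm_pos_sq he p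
    rw [h₀, htouch] at this
    norm_num at this
  have hni : S.vr i (t₀ + τ) ≠ vel e (Q i) := by
    rw [hvi]
    simpa using hne
  have hnj : S.vr j (t₀ + τ) ≠ vel e (Q j) := by
    rw [hvj]
    simpa using hne
  have hxij : S.x i (t₀ + τ) - S.x j (t₀ + τ) = pos e p := hx' i j
  have hxji : S.x j (t₀ + τ) - S.x i (t₀ + τ) = -pos e p := by rw [← hxij, neg_sub]
  have htwo : ‖pos e p‖ = 2 := (norm_pos_eq_two_iff he).2 htouch
  have himp : ⟪vel e p, (2⁻¹ : ℝ) • pos e p⟫ • ((2⁻¹ : ℝ) • pos e p) =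
      (1 / 4 * p.radial) • pos e p := by
    rw [real_inner_smul_right, inner_vel_pos he, smul_smul]
    congr 1
    ring
  have honly : ∀ k l, k ≠ l → ‖S.x k (t₀ + τ) - S.x l (t₀ + τ)‖ = 2 →
      (k = i ∧ l = j) ∨ (k = j ∧ l = i) := by
    intro k l hkl h₂
    rw [hx', norm_pos_eq_two_iff he] at h₂
    exact hclear k l hkl h₂
  have hdist : ∀ k l, k ≠ l → ∀ t ∈ Set.Ici t₀, t ≤ t₀ + τ →
      2 ≤ ‖(S.x k (t₀ + τ) + (t - (t₀ + τ)) • vel e (Q k)) -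
        (S.x l (t₀ + τ) + (t - (t₀ + τ)) • vel e (Q l))‖ := by
    intro k l hkl t ht₀ ht
    have hpos : (S.x k (t₀ + τ) + (t - (t₀ + τ)) • vel e (Q k)) -
        (S.x l (t₀ + τ) + (t - (t₀ + τ)) • vel e (Q l)) =
        pos e (advance (t - t₀) (rel (Q k) (Q l))) := by
      rw [pos_advance, ← pos_sub, ← vel_sub, hx, hx, pos_collide, pos_collide, pos_advance,
        pos_advance]
      module
    rw [hpos]
    exact two_le_norm_pos he (hsep k l hkl (t - t₀) ⟨sub_nonneg.2 ht₀, by linarith⟩)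
  have hrule : ∀ k, S.vr k (t₀ + τ) ≠ vel e (Q k) →
      ∃ l, l ≠ k ∧ ‖S.x k (t₀ + τ) - S.x l (t₀ + τ)‖ = 2 ∧ S.vr l (t₀ + τ) ≠ vel e (Q l) ∧
        (∀ m, m ≠ k → ‖S.x k (t₀ + τ) - S.x m (t₀ + τ)‖ = 2 → m = l) ∧
        (∀ m, m ≠ k → m ≠ l → S.vr m (t₀ + τ) = vel e (Q m)) ∧
        S.vr k (t₀ + τ) = vel e (Q k) - ⟪vel e (Q k) - vel e (Q l),
            (2⁻¹ : ℝ) • (S.x k (t₀ + τ) - S.x l (t₀ + τ))⟫ •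
          ((2⁻¹ : ℝ) • (S.x k (t₀ + τ) - S.x l (t₀ + τ))) ∧
        S.vr l (t₀ + τ) = vel e (Q l) + ⟪vel e (Q k) - vel e (Q l),
            (2⁻¹ : ℝ) • (S.x k (t₀ + τ) - S.x l (t₀ + τ))⟫ •
          ((2⁻¹ : ℝ) • (S.x k (t₀ + τ) - S.x l (t₀ + τ))) := by
    intro k hk
    have hk' : k = i ∨ k = j := by
      by_contra! h'
      exact hk (hvk k h'.1 h'.2)
    rcases hk' with rfl | rfl
    · refine ⟨j, hij.symm, by rw [hxij, htwo], hnj, fun m hm h₂ => ?_, hvk, ?_, ?_⟩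
      · rcases honly _ _ hm.symm h₂ with h' | h'
        · exact h'.2
        · exact absurd h'.1 hij
      · rw [hxij, hvel, himp, hvi]
      · rw [hxij, hvel, himp, hvj]
    · refine ⟨i, hij, by rw [hxji, norm_neg, htwo], hni, fun m hm h₂ => ?_,
        fun m h₁ h₂ => hvk m h₂ h₁, ?_, ?_⟩
      · rcases honly _ _ hm.symm h₂ with h' | h'
        · exact absurd h'.1 hij.symm
        · exact h'.2
      · rw [hxji, ← neg_sub (vel e (Q i)), hvel, smul_neg, inner_neg_neg, smul_neg, himp, hvj,
          sub_neg_eq_add]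
      · rw [hxji, ← neg_sub (vel e (Q i)), hvel, smul_neg, inner_neg_neg, smul_neg, himp, hvi,
          sub_eq_add_neg]
  have hlt : t₀ < t₀ + τ := by linarith
  refine ⟨S.prepend (fun k => vel e (Q k)) (Set.Ici t₀) hdist hrule, fun k => ?_, fun k => ?_,
    insert (t₀ + τ, {i, j}) F, ?_, ?_⟩
  · simp only [BallSystem.prepend, hlt.le, if_true]
    rw [hx, pos_collide, pos_advance]
    module
  · simp only [BallSystem.prepend, hlt, if_true]
  · rw [Finset.coe_insert, Set.insert_subset_iff]
    refine ⟨⟨hlt.le, ⟨t₀, Set.self_mem_Ici, hlt⟩, i, j, hij, rfl, ?_⟩,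
      hF.trans (S.collisions_subset_prepend _ _ _ _ (Set.Ici_subset_Ici.2 hlt.le))⟩
    simp only [BallSystem.prepend, le_refl, lt_irrefl, if_true, if_false, sub_self, zero_smul,
      add_zero]
    exact ⟨by rw [hxij, htwo], hni, hnj⟩
  · rw [Finset.card_insert_of_notMem]
    · omega
    · intro hmem
      obtain ⟨-, ⟨s, hs, hst⟩, -⟩ := hF hmem
      exact absurd hst (not_lt.2 hs)

theorem exists_ballSystem_of_hasFuture (he : Orthonormal ℝ e) {N : ℕ} {Q : Fin n → Phase ℝ}
    (h : HasFuture e N 0 Q)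
    (hsep : ∀ k l, k ≠ l → ∀ s ≤ 0, 4 ≤ (advance s (rel (Q k) (Q l))).distSq) :
    ∃ S : BallSystem (Fin n) d Set.univ, ∃ F : Finset (ℝ × Finset (Fin n)),
      ↑F ⊆ S.collisions ∧ N ≤ F.card := by
  obtain ⟨S, hx, hv, F, hF, hN⟩ := h
  refine ⟨S.prepend (fun k => vel e (Q k)) Set.univ ?_ fun k hk => absurd (hv k) hk, F,
    hF.trans (S.collisions_subset_prepend _ _ _ _ (Set.subset_univ _)), hN⟩
  intro k l hkl t _ ht
  rw [hx, hx, sub_zero, ← pos_advance, ← pos_advance, pos_sub, rel_advance]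
  exact two_le_norm_pos he (hsep k l hkl t ht)

end Future

/-- The denominator of the fixed-point numbers used to enclose real numbers. -/
def scale : ℤ := 1000000000000000000000000000000000000

theorem scale_pos : (0 : ℝ) < scale := by norm_num [scale]

/-- The interval of the real numbers `r` with `|r * scale - c| ≤ e`. -/
structure Approx where
  c : ℤ
  e : ℤ

namespace Approx

def Holds (a : Approx) (r : ℝ) : Prop := |r * scale - a.c| ≤ a.e

instance : Add Approx := ⟨fun a b => ⟨a.c + b.c, a.e + b.e⟩⟩

instance : Sub Approx := ⟨fun a b => ⟨a.c - b.c, a.e + b.e⟩⟩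

instance : Mul Approx := ⟨fun a b =>
  ⟨a.c * b.c / scale, (|a.c| * b.e + |b.c| * a.e + a.e * b.e) / scale + 2⟩⟩

theorem Holds.add {a b : Approx} {r s : ℝ} (ha : a.Holds r) (hb : b.Holds s) :
    (a + b).Holds (r + s) := by
  have : |(r + s) * scale - ((a.c + b.c : ℤ) : ℝ)| ≤ ((a.e + b.e : ℤ) : ℝ) := by
    push_cast
    calc _ = |(r * scale - a.c) + (s * scale - b.c)| := by ring_nf
      _ ≤ _ := (abs_add_le _ _).trans (add_le_add ha hb)
  exact this

theorem Holds.sub {a b : Approx} {r s : ℝ} (ha : a.Holds r) (hb : b.Holds s) :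
    (a - b).Holds (r - s) := by
  have : |(r - s) * scale - ((a.c - b.c : ℤ) : ℝ)| ≤ ((a.e + b.e : ℤ) : ℝ) := by
    push_cast
    calc _ = |(r * scale - a.c) - (s * scale - b.c)| := by ring_nf
      _ ≤ _ := (abs_sub _ _).trans (add_le_add ha hb)
  exact this

theorem abs_div_sub_ediv_le_one (z : ℤ) : |(z : ℝ) / scale - ((z / scale : ℤ) : ℝ)| ≤ 1 := by
  have h : (z : ℝ) = scale * ((z / scale : ℤ) : ℝ) + ((z % scale : ℤ) : ℝ) := by
    exact_mod_cast (Int.mul_ediv_add_emod z scale).symm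
  have h₀ : (0 : ℝ) ≤ ((z % scale : ℤ) : ℝ) := by
    exact_mod_cast Int.emod_nonneg z (by norm_num [scale])
  have h₁ : ((z % scale : ℤ) : ℝ) ≤ scale := by
    exact_mod_cast (Int.emod_lt_of_pos z (by norm_num [scale])).le
  have h₂ : (z : ℝ) / scale - ((z / scale : ℤ) : ℝ) = ((z % scale : ℤ) : ℝ) / scale := by
    rw [eq_div_iff scale_pos.ne', sub_mul, div_mul_cancel₀ _ scale_pos.ne']
    linarith
  rw [h₂, abs_of_nonneg (div_nonneg h₀ scale_pos.le)]
  exact div_le_one_of_le₀ h₁ scale_pos.le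

theorem Holds.mul {a b : Approx} {r s : ℝ} (ha : a.Holds r) (hb : b.Holds s) :
    (a * b).Holds (r * s) := by
  have h₁ := abs_div_sub_ediv_le_one (a.c * b.c)
  have h₂ := abs_div_sub_ediv_le_one (|a.c| * b.e + |b.c| * a.e + a.e * b.e)
  have h₃ : |r * s * scale - ((a.c * b.c : ℤ) : ℝ) / scale| ≤
      ((|a.c| * b.e + |b.c| * a.e + a.e * b.e : ℤ) : ℝ) / scale := by
    have h₄ : r * s * scale - ((a.c * b.c : ℤ) : ℝ) / scale =
        (a.c * (s * scale - b.c) + b.c * (r * scale - a.c) +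
          (r * scale - a.c) * (s * scale - b.c)) / scale := by
      have := scale_pos.ne'
      push_cast
      field_simp
      ring
    rw [h₄, abs_div, abs_of_pos scale_pos]
    refine div_le_div_of_nonneg_right ?_ scale_pos.le
    push_cast
    refine (abs_add_three _ _ _).trans ?_
    rw [abs_mul, abs_mul, abs_mul]
    have ha' : |r * scale - a.c| ≤ a.e := ha
    have hb' : |s * scale - b.c| ≤ b.e := hb
    have := (abs_nonneg _).trans ha'
    gcongr
  have : |r * s * scale - ((a.c * b.c / scale : ℤ) : ℝ)| ≤
      (((|a.c| * b.e + |b.c| * a.e + a.e * b.e) / scale + 2 : ℤ) : ℝ) := by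
    rw [Int.cast_add, Int.cast_ofNat]
    rw [abs_le] at *
    constructor <;> linarith
  exact this

/-- Every real number in the interval exceeds `m`. -/
abbrev Above (a : Approx) (m : ℤ) : Prop := m * scale + a.e < a.c

/-- Every real number in the interval is smaller than `m`. -/
abbrev Below (a : Approx) (m : ℤ) : Prop := a.c + a.e < m * scale

theorem Holds.lt_of_above {a : Approx} {r : ℝ} (ha : a.Holds r) {m : ℤ} (h : a.Above m) :
    (m : ℝ) < r := by
  have h' : (m : ℝ) * scale + a.e < a.c := by exact_mod_cast h
  have := (abs_le.1 ha).1
  exact lt_of_mul_lt_mul_right (by linarith) scale_pos.le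

theorem Holds.lt_of_below {a : Approx} {r : ℝ} (ha : a.Holds r) {m : ℤ} (h : a.Below m) :
    r < m := by
  have h' : (a.c : ℝ) + a.e < m * scale := by exact_mod_cast h
  have := (abs_le.1 ha).2
  exact lt_of_mul_lt_mul_right (by linarith) scale_pos.le

def low (a : Approx) : Approx := ⟨a.c - a.e, 0⟩

def high (a : Approx) : Approx := ⟨a.c + a.e, 0⟩

theorem holds_div_scale (z : ℤ) : Holds ⟨z, 0⟩ (z / scale) := by
  simp [Holds, div_mul_cancel₀ _ scale_pos.ne']

theorem holds_iff {a : Approx} {r : ℝ} : a.Holds r ↔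
    r ∈ Set.Icc (((a.c - a.e : ℤ) : ℝ) / scale) (((a.c + a.e : ℤ) : ℝ) / scale) := by
  rw [Set.mem_Icc, div_le_iff₀ scale_pos, le_div_iff₀ scale_pos, Holds, abs_le]
  push_cast
  constructor <;> rintro ⟨h₁, h₂⟩ <;> constructor <;> linarith

/-- The constant `1/4`. -/
def quarter : Approx := ⟨250000000000000000000000000000000000, 0⟩

theorem holds_quarter : quarter.Holds (1 / 4) := by
  norm_num [Holds, quarter, scale]

/-- The constant `4`. -/
def four : Approx := ⟨4000000000000000000000000000000000000, 0⟩

theorem holds_four : four.Holds 4 := by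
  norm_num [Holds, four, scale]

end Approx

namespace Phase

open Approx

structure Holds (A : Phase Approx) (p : Phase ℝ) : Prop where
  x : A.x.Holds p.x
  y : A.y.Holds p.y
  u : A.u.Holds p.u
  v : A.v.Holds p.v

namespace Holds

variable {A B : Phase Approx} {p q : Phase ℝ}

theorem rel (ha : A.Holds p) (hb : B.Holds q) : (A.rel B).Holds (p.rel q) :=
  ⟨ha.x.sub hb.x, ha.y.sub hb.y, ha.u.sub hb.u, ha.v.sub hb.v⟩

theorem distSq (h : A.Holds p) : A.distSq.Holds p.distSq := (h.x.mul h.x).add (h.y.mul h.y)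

theorem radial (h : A.Holds p) : A.radial.Holds p.radial := (h.x.mul h.u).add (h.y.mul h.v)

theorem speedSq (h : A.Holds p) : A.speedSq.Holds p.speedSq := (h.u.mul h.u).add (h.v.mul h.v)

theorem cross (h : A.Holds p) : A.cross.Holds p.cross := (h.x.mul h.v).sub (h.y.mul h.u)

theorem advance (h : A.Holds p) {T : Approx} {τ : ℝ} (hT : T.Holds τ) :
    (A.advance T).Holds (p.advance τ) :=
  ⟨h.x.add (hT.mul h.u), h.y.add (hT.mul h.v), h.u, h.v⟩

theorem loseImpulse {K : Approx} {κ : ℝ} (hK : K.Holds κ) (ha : A.Holds p) (hb : B.Holds q) :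
    (loseImpulse K A B).Holds (loseImpulse κ p q) :=
  ⟨hb.x, hb.y, hb.u.sub ((hK.mul ha.radial).mul ha.x), hb.v.sub ((hK.mul ha.radial).mul ha.y)⟩

theorem gainImpulse {K : Approx} {κ : ℝ} (hK : K.Holds κ) (ha : A.Holds p) (hb : B.Holds q) :
    (gainImpulse K A B).Holds (gainImpulse κ p q) :=
  ⟨hb.x, hb.y, hb.u.add ((hK.mul ha.radial).mul ha.x), hb.v.add ((hK.mul ha.radial).mul ha.y)⟩

theorem collide {n : ℕ} {B : Fin n → Phase Approx} {Q : Fin n → Phase ℝ}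
    (h : ∀ k, (B k).Holds (Q k)) {K T : Approx} {κ τ : ℝ} (hK : K.Holds κ) (hT : T.Holds τ)
    (i j k : Fin n) : (collide K T i j B k).Holds (collide κ τ i j Q k) := by
  have hr := ((h i).advance hT).rel ((h j).advance hT)
  unfold Phase.collide
  split_ifs
  · exact hr.loseImpulse hK ((h i).advance hT)
  · exact hr.gainImpulse hK ((h j).advance hT)
  · exact (h k).advance hT

end Holds

/-- At distance more than `2` from the origin and moving away from it. -/
abbrev Leaves (A : Phase Approx) : Prop := A.distSq.Above 4 ∧ A.radial.Above 0

/-- At distance more than `2` from the origin and moving towards it. -/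
abbrev Approaches (A : Phase Approx) : Prop := A.distSq.Above 4 ∧ A.radial.Below 0

/-- Moving along a line at distance more than `2` from the origin. -/
abbrev Misses (A : Phase Approx) : Prop := (A.cross * A.cross - four * A.speedSq).Above 0

theorem Holds.lt_of_misses {A : Phase Approx} {p : Phase ℝ} (h : A.Holds p) (hm : A.Misses)
    (s : ℝ) : 4 < (Phase.advance s p).distSq := by
  refine lt_distSq_advance_of_cross ?_ s
  have := ((h.cross.mul h.cross).sub (holds_four.mul h.speedSq)).lt_of_above hm
  rw [Int.cast_zero] at this
  linarith

theorem Holds.lt_of_leaves {A : Phase Approx} {p : Phase ℝ} (h : A.Holds p) (hl : A.Leaves)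
    {s : ℝ} (hs : 0 ≤ s) : 4 < (Phase.advance s p).distSq := by
  have h₁ : (4 : ℝ) < p.distSq := by exact_mod_cast h.distSq.lt_of_above hl.1
  have h₂ : 0 < p.radial := by exact_mod_cast h.radial.lt_of_above hl.2
  rcases hs.eq_or_lt with rfl | hs
  · rwa [advance_zero]
  · exact lt_distSq_advance_of_leaving h₁.le h₂ hs

theorem Holds.lt_of_approaches {A : Phase Approx} {p : Phase ℝ} {s τ : ℝ}
    (h : A.Holds (Phase.advance τ p)) (ha : A.Approaches) (hs : s ≤ τ) :
    4 < (Phase.advance s p).distSq := by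
  have h₁ : (4 : ℝ) < (Phase.advance τ p).distSq := by exact_mod_cast h.distSq.lt_of_above ha.1
  have h₂ : (Phase.advance τ p).radial < 0 := by exact_mod_cast h.radial.lt_of_below ha.2
  exact h₁.trans_le (le_distSq_advance_of_approaching le_rfl h₂ hs)

end Phase

section Certificate

open Phase

variable {n : ℕ}

/-- The next collision is between the balls `i` and `j`, after the time `τ`. -/
structure Event (n : ℕ) where
  i : Fin n
  j : Fin n
  τ : Approx

/-- Checks that the listed collisions happen one after the other, and no others, for all initial
phases enclosed by `B`; `last` is the pair of balls that have just collided. -/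
def predicts (B : Fin n → Phase Approx) (last : Option (Fin n × Fin n)) : List (Event n) → Bool
  | [] => decide (∀ k l, k < l →
      last = some (k, l) ∨ (rel (B k) (B l)).Leaves ∨ (rel (B k) (B l)).Misses)
  | h :: hs =>
    decide (h.i < h.j ∧ 0 ≤ h.τ.e ∧ h.τ.low.Above 0 ∧
      (advance h.τ.low (rel (B h.i) (B h.j))).distSq.Above 4 ∧
      (advance h.τ.high (rel (B h.i) (B h.j))).distSq.Below 4 ∧
      (advance h.τ.high (rel (B h.i) (B h.j))).radial.Below 0 ∧
      ∀ k l, k < l → (k = h.i ∧ l = h.j) ∨ last = some (k, l) ∨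
        (rel (B k) (B l)).Leaves ∨ (rel (B k) (B l)).Misses ∨
        (advance h.τ (rel (B k) (B l))).Approaches) &&
    predicts (collide Approx.quarter h.τ h.i h.j B) (some (h.i, h.j)) hs

theorem forall_ne_of_forall_lt {P : Fin n → Fin n → Prop} (hs : ∀ k l, P k l → P l k)
    (h : ∀ k l, k < l → P k l) (k l : Fin n) (hkl : k ≠ l) : P k l :=
  hkl.lt_or_gt.elim (h k l) fun h' => hs _ _ (h l k h')

theorem distSq_advance_rel_comm (s : ℝ) (a b : Phase ℝ) :
    (advance s (rel a b)).distSq = (advance s (rel b a)).distSq := by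
  rw [← rel_advance, ← rel_advance, distSq_rel_comm]

theorem hasFuture_of_predicts {d : ℕ} {e : Fin 2 → EuclideanSpace ℝ (Fin d)}
    (he : Orthonormal ℝ e) (hs : List (Event n)) :
    ∀ (B : Fin n → Phase Approx) (last : Option (Fin n × Fin n)) (Q : Fin n → Phase ℝ) (t₀ : ℝ),
      predicts B last hs → (∀ k, (B k).Holds (Q k)) →
      (∀ k l, last = some (k, l) → (rel (Q k) (Q l)).distSq = 4 ∧ 0 < (rel (Q k) (Q l)).radial) →
      HasFuture e hs.length t₀ Q := by
  induction hs with
  | nil =>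
    intro B last Q t₀ hp hB hlast
    rw [predicts, decide_eq_true_eq] at hp
    refine hasFuture_of_free he (forall_ne_of_forall_lt (fun k l h s => ?_) ?_) t₀
    · rw [distSq_advance_rel_comm]
      exact h s
    · intro k l hkl s hs
      rcases hp k l hkl with h | h | h
      · rcases hs.eq_or_lt with rfl | hs
        · rw [advance_zero, (hlast k l h).1]
        · exact (lt_distSq_advance_of_leaving (hlast k l h).1.ge (hlast k l h).2 hs).le
      · exact (((hB k).rel (hB l)).lt_of_leaves h hs).le
      · exact (((hB k).rel (hB l)).lt_of_misses h s).le
  | cons h hs ih =>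
    intro B last Q t₀ hp hB hlast
    rw [predicts, Bool.and_eq_true, decide_eq_true_eq] at hp
    obtain ⟨⟨hij, he₀, hpos, hlow, hhigh, hrad, hother⟩, hnext⟩ := hp
    have hr := (hB h.i).rel (hB h.j)
    have hL := Approx.holds_div_scale (h.τ.c - h.τ.e)
    have hH := Approx.holds_div_scale (h.τ.c + h.τ.e)
    set a : ℝ := ((h.τ.c - h.τ.e : ℤ) : ℝ) / scale with ha
    set b : ℝ := ((h.τ.c + h.τ.e : ℤ) : ℝ) / scale with hb
    have ha₀ : 0 < a := by exact_mod_cast hL.lt_of_above hpos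
    have ha₁ : 4 < (advance a (rel (Q h.i) (Q h.j))).distSq := by
      exact_mod_cast (hr.advance hL).distSq.lt_of_above hlow
    have hb₁ : (advance b (rel (Q h.i) (Q h.j))).distSq < 4 := by
      exact_mod_cast (hr.advance hH).distSq.lt_of_below hhigh
    have hb₂ : (advance b (rel (Q h.i) (Q h.j))).radial < 0 := by
      exact_mod_cast (hr.advance hH).radial.lt_of_below hrad
    have hab : a ≤ b :=
      div_le_div_of_nonneg_right (Int.cast_le.2 (by linarith)) scale_pos.le
    obtain ⟨τ, hτ, htouch⟩ := exists_distSq_advance_eq hab ha₁ hb₁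
    have hT : h.τ.Holds τ := Approx.holds_iff.2 hτ
    have hτ₀ : 0 < τ := ha₀.trans_le hτ.1
    have happ : (advance τ (rel (Q h.i) (Q h.j))).radial < 0 := by
      rw [radial_advance] at hb₂ ⊢
      linarith [mul_le_mul_of_nonneg_right hτ.2 (rel (Q h.i) (Q h.j)).speedSq_nonneg]
    have hclear : ∀ k l, k < l → ¬(k = h.i ∧ l = h.j) → ∀ s ∈ Set.Icc 0 τ,
        4 ≤ (advance s (rel (Q k) (Q l))).distSq ∧
          (0 < s → 4 < (advance s (rel (Q k) (Q l))).distSq) := by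
      intro k l hkl hne s hs
      have hr' := (hB k).rel (hB l)
      have hlt : last = some (k, l) ∨ 4 < (advance s (rel (Q k) (Q l))).distSq := by
        rcases hother k l hkl with h' | h' | h' | h' | h'
        · exact absurd h' hne
        · exact Or.inl h'
        · exact Or.inr (hr'.lt_of_leaves h' hs.1)
        · exact Or.inr (hr'.lt_of_misses h' s)
        · exact Or.inr ((hr'.advance hT).lt_of_approaches h' hs.2)
      rcases hlt with h' | h'
      · have h₁ := (hlast k l h').1
        have h₂ : 0 < s → 4 < (advance s (rel (Q k) (Q l))).distSq :=
          lt_distSq_advance_of_leaving h₁.ge (hlast k l h').2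
        rcases hs.1.eq_or_lt with rfl | hs
        · rw [advance_zero]
          exact ⟨h₁.ge, fun h₀ => absurd h₀ (lt_irrefl _)⟩
        · exact ⟨(h₂ hs).le, h₂⟩
      · exact ⟨h'.le, fun _ => h'⟩
    refine hasFuture_of_collide he hij.ne hτ₀ ?_ ?_ htouch happ ?_
    · refine ih _ _ _ _ hnext (Holds.collide hB Approx.holds_quarter hT h.i h.j) ?_
      rintro k l hkl
      obtain ⟨rfl, rfl⟩ := Prod.mk.inj (Option.some.inj hkl)
      exact ⟨by rw [distSq_rel_collide _ hij.ne, htouch],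
        by rw [radial_rel_collide hij.ne htouch]; exact neg_pos.2 happ⟩
    · refine forall_ne_of_forall_lt (fun k l h' s => ?_) fun k l hkl s hs => ?_
      · rw [distSq_advance_rel_comm]
        exact h' s
      · by_cases hne : k = h.i ∧ l = h.j
        · rw [hne.1, hne.2]
          exact le_distSq_advance_of_approaching htouch.ge happ hs.2
        · exact (hclear k l hkl hne s hs).1
    · refine forall_ne_of_forall_lt (fun k l h' h₂ => ?_) fun k l hkl h₂ => ?_
      · rw [distSq_advance_rel_comm] at h₂
        exact (h' h₂).symm.imp And.symm And.symm
      · left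
        by_contra hne
        exact ((hclear k l hkl hne τ ⟨hτ₀.le, le_rfl⟩).2 hτ₀).ne' h₂

/-- The exact decimal fractions with numerators in `P` and denominator `10 ^ 12`. -/
def enclosePicos (P : Phase ℤ) : Phase Approx :=
  ⟨⟨P.x * 1000000000000000000000000, 0⟩, ⟨P.y * 1000000000000000000000000, 0⟩,
    ⟨P.u * 1000000000000000000000000, 0⟩, ⟨P.v * 1000000000000000000000000, 0⟩⟩

/-- Checks that no collisions have happened before. -/
def noPast (B : Fin n → Phase Approx) : Bool :=
  decide (∀ k l, k < l → (rel (B k) (B l)).Approaches ∨ (rel (B k) (B l)).Misses)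

theorem exists_ballSystem_of_predicts {d : ℕ} (hd : 2 ≤ d) (P : Fin n → Phase ℤ)
    (hs : List (Event n)) (hpast : noPast fun k => enclosePicos (P k))
    (hp : predicts (fun k => enclosePicos (P k)) none hs) :
    ∃ S : BallSystem (Fin n) d Set.univ, ∃ F : Finset (ℝ × Finset (Fin n)),
      ↑F ⊆ S.collisions ∧ hs.length ≤ F.card := by
  have he : Orthonormal ℝ fun k : Fin 2 => EuclideanSpace.basisFun (Fin d) ℝ (Fin.castLE hd k) :=
    (EuclideanSpace.basisFun (Fin d) ℝ).orthonormal.comp _ (Fin.castLE_injective hd)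
  have hB : ∀ k, ∃ Q : Phase ℝ, (enclosePicos (P k)).Holds Q := fun k =>
    ⟨⟨_, _, _, _⟩, Approx.holds_div_scale _, Approx.holds_div_scale _,
      Approx.holds_div_scale _, Approx.holds_div_scale _⟩
  choose Q hQ using hB
  refine exists_ballSystem_of_hasFuture he
    (hasFuture_of_predicts he hs _ _ Q 0 hp hQ fun _ _ h => nomatch h) ?_
  refine forall_ne_of_forall_lt (fun k l h s => ?_) fun k l hkl s hs => ?_
  · rw [distSq_advance_rel_comm]
    exact h s
  · have hr := (hQ k).rel (hQ l)
    rw [noPast, decide_eq_true_eq] at hpast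
    rcases hpast k l hkl with h | h
    · rw [← advance_zero ((Q k).rel (Q l))] at hr
      exact (hr.lt_of_approaches h hs).le
    · exact (hr.lt_of_misses h s).le

/-- Positions and velocities of six balls, in units of `10 ^ (-12)`. -/
def initialPhase : Fin 6 → Phase ℤ :=
  ![⟨0, 0, 0, 0⟩,
    ⟨2957049415311, 0, -1638814472085, 770532252355⟩,
    ⟨-1884576463193, 955106734206, 632648879855, 502168745984⟩,
    ⟨-71704532247851, -144521441339242, 2627320197157, 6473497978538⟩,
    ⟨-1066529091985370, -2862547125240383, 34271217735724, 93855134220534⟩,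
    ⟨-1415347046547079, -40742072300847583, 43911822718853, 1293506959556370⟩]

/-- The collisions of the six balls in order of time, with enclosures of the waiting times. -/
def events (n : ℕ) [NeZero n] : List (Event n) :=
  [⟨0, 2, ⟨397926272021417664965708940510046744, 32⟩⟩,
    ⟨0, 1, ⟨200213742237561571497379057885428975, 64⟩⟩,
    ⟨0, 2, ⟨95531801784506382021093200352109205, 512⟩⟩,
    ⟨1, 2, ⟨5431326889387668599265868416759273537, 65536⟩⟩,
    ⟨0, 3, ⟨13517235022905843911530427597862124756, 131072⟩⟩,
    ⟨0, 2, ⟨5864705500251200243610310339367033033, 16777216⟩⟩,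
    ⟨1, 2, ⟨1097255718789586305251463411343393625, 268435456⟩⟩,
    ⟨3, 4, ⟨3598367020416896565882145793295219435, 536870912⟩⟩,
    ⟨0, 3, ⟨591930965194331002575269981193283561, 68719476736⟩⟩,
    ⟨0, 2, ⟨131888524282672827028596095360971669, 2199023255552⟩⟩,
    ⟨1, 2, ⟨538194593736739416866768202200214196, 562949953421312⟩⟩,
    ⟨4, 5, ⟨8953225207491146484499737678882938, 1125899906842624⟩⟩,
    ⟨3, 4, ⟨49812579010222174162245397976166241, 144115188075855872⟩⟩,
    ⟨1, 3, ⟨64989861658458316694735503583187603, 73786976294838206464⟩⟩,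
    ⟨1, 2, ⟨23718627930972436681110737555616927, 4722366482869645213696⟩⟩,
    ⟨0, 2, ⟨684221847437403955187238358926599785, 4835703278458516698824704⟩⟩]

end Certificate

/-- For every `4 ≤ n ≤ 6` and `d ≥ 2` there is an elastic collision
system of `n` unit balls in `ℝ^d`, on the time interval `ℝ`, with at least
`1 + n(n-1)/2` collisions. -/
theorem ball_collisions_ge_one_add (n d : ℕ) (hn4 : 4 ≤ n) (hn6 : n ≤ 6) (hd : 2 ≤ d) :
    ∃ S : BallSystem (Fin n) d Set.univ, ∃ F : Finset (ℝ × Finset (Fin n)),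
      ↑F ⊆ S.collisions ∧ 1 + n * (n - 1) / 2 ≤ F.card := by
  interval_cases n
  · exact exists_ballSystem_of_predicts hd (fun k => initialPhase (Fin.castLE (by norm_num) k))
      ((events 4).take 7) (by decide +kernel) (by decide +kernel)
  · exact exists_ballSystem_of_predicts hd (fun k => initialPhase (Fin.castLE (by norm_num) k))
      ((events 5).take 11) (by decide +kernel) (by decide +kernel)
  · exact exists_ballSystem_of_predicts hd initialPhase (events 6)
      (by decide +kernel) (by decide +kernel)
end

section
/- For every integer n ≥ 3 and every integer d ≥ 2, there exists an elastic collision system of n unit balls in ℝ^d on the time interval ℝ whose number of collisions is strictly greater than n(n−1)/2. (Hence K(n,d) > n(n−1)/2.) -/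
open scoped RealInnerProductSpace

section PartialSystems

variable {E : Type*} [NormedAddCommGroup E] [InnerProductSpace ℝ E]

/-- A system of `n` unit balls which is only required to be free of overlaps up to the time `t₀`,
from which on ball `i` moves along the line `t ↦ a i + t • v i`.  It has at least `N` collisions,
and up to the time `t₀` the coordinates of the centers along `e` are at least `B * t - A`. -/
structure PartialSystem (e : E) (n : ℕ) (B A : ℝ) (N : ℕ) (t₀ : ℝ) (a v : ℕ → E) where
  x : Fin n → ℝ → E
  vr : Fin n → ℝ → E
  vl : Fin n → ℝ → E
  events : Finset (ℝ × Finset (Fin n))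
  right_lin : ∀ i t, ∃ ε > 0, ∀ s ∈ Set.Icc t (t + ε), x i s = x i t + (s - t) • vr i t
  left_lin : ∀ i t, ∃ ε > 0, ∀ s ∈ Set.Icc (t - ε) t, x i s = x i t + (s - t) • vl i t
  dist_ge : ∀ i j, i ≠ j → ∀ t ≤ t₀, 2 ≤ ‖x i t - x j t‖
  collision_rule : ∀ i t, vr i t ≠ vl i t →
    ∃ j, j ≠ i ∧ ‖x i t - x j t‖ = 2 ∧ vr j t ≠ vl j t ∧
      (∀ k, k ≠ i → ‖x i t - x k t‖ = 2 → k = j) ∧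
      (∀ k, k ≠ i → k ≠ j → vr k t = vl k t) ∧
      vr i t = vl i t -
        ⟪vl i t - vl j t, (2⁻¹ : ℝ) • (x i t - x j t)⟫ • ((2⁻¹ : ℝ) • (x i t - x j t)) ∧
      vr j t = vl j t +
        ⟪vl i t - vl j t, (2⁻¹ : ℝ) • (x i t - x j t)⟫ • ((2⁻¹ : ℝ) • (x i t - x j t))
  free : ∀ i, ∀ t ≥ t₀, x i t = a i + t • v i
  free_vr : ∀ i, ∀ t ≥ t₀, vr i t = v i
  free_vl : ∀ i, ∀ t > t₀, vl i t = v i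
  low : ∀ i, ∀ t ≤ t₀, B * t - A ≤ ⟪x i t, e⟫
  events_spec : ∀ p ∈ events, p.1 ≤ t₀ ∧ ∃ i j, i ≠ j ∧ p.2 = {i, j} ∧
    ‖x i p.1 - x j p.1‖ = 2 ∧ vr i p.1 ≠ vl i p.1 ∧ vr j p.1 ≠ vl j p.1
  card_events : N ≤ events.card

/-- Balls moving freely along the lines `t ↦ a i + t • v i`. -/
theorem PartialSystem.exists_of_free (e : E) {n : ℕ} {B t₀ : ℝ} {a v : ℕ → E}
    (hB : ∀ i < n, ⟪v i, e⟫ ≤ B)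
    (hsep : ∀ i < n, ∀ j < n, i < j → ∀ t ≤ t₀, 2 ≤ ‖a j + t • v j - (a i + t • v i)‖) :
    ∃ A, Nonempty (PartialSystem e n B A 0 t₀ a v) := by
  obtain ⟨A, hA⟩ := Finite.exists_le fun i : Fin n => B * t₀ - ⟪a i + t₀ • v i, e⟫
  refine ⟨A, ⟨
    { x := fun i t => a i + t • v i
      vr := fun i _ => v i
      vl := fun i _ => v i
      events := ∅
      right_lin := fun i t => ⟨1, one_pos, fun s _ => by module⟩
      left_lin := fun i t => ⟨1, one_pos, fun s _ => by module⟩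
      dist_ge := ?_
      collision_rule := fun i t h => absurd rfl h
      free := fun _ _ _ => rfl
      free_vr := fun _ _ _ => rfl
      free_vl := fun _ _ _ => rfl
      low := fun i t ht => ?_
      events_spec := by simp
      card_events := by simp }⟩⟩
  · intro i j hij t ht
    rcases lt_or_gt_of_ne (Fin.val_ne_of_ne hij) with h | h
    · rw [norm_sub_rev]
      exact hsep i i.2 j j.2 h t ht
    · exact hsep j j.2 i i.2 h t ht
  · have h1 := hA i
    have h2 := hB i i.2
    simp only [inner_add_left, real_inner_smul_left] at h1 ⊢
    nlinarith

/-- Adding a ball that moves freely and stays behind all the other balls. -/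
theorem PartialSystem.exists_cons {e : E} (he : ‖e‖ = 1) {n N : ℕ} {B B' A t₀ : ℝ}
    {a v a' v' : ℕ → E} (S : PartialSystem e n B A N t₀ a v)
    (ha : ∀ i < n, a' (i + 1) = a i) (hv : ∀ i < n, v' (i + 1) = v i)
    (hBB : B ≤ B') (hB : B ≤ ⟪v' 0, e⟫) (hB' : ⟪v' 0, e⟫ ≤ B')
    (h0 : ⟪a' 0 + t₀ • v' 0, e⟫ + 2 < B * t₀ - A) :
    ∃ A', Nonempty (PartialSystem e (n + 1) B' A' N t₀ a' v') := by
  have far : ∀ i, ∀ t ≤ t₀, 2 < ‖S.x i t - (a' 0 + t • v' 0)‖ := by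
    intro i t ht
    have h1 := S.low i t ht
    have h2 := real_inner_le_norm (S.x i t - (a' 0 + t • v' 0)) e
    simp only [inner_sub_left, inner_add_left, real_inner_smul_left, he, mul_one] at h0 h2
    nlinarith
  refine ⟨max (A + (B' - B) * t₀) (B' * t₀ - ⟪a' 0 + t₀ • v' 0, e⟫), ⟨
    { x := Fin.cons (fun t => a' 0 + t • v' 0) S.x
      vr := Fin.cons (fun _ => v' 0) S.vr
      vl := Fin.cons (fun _ => v' 0) S.vl
      events := S.events.map ((Function.Embedding.refl ℝ).prodMap
        (Finset.mapEmbedding (Fin.succEmb n)).toEmbedding)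
      right_lin := ?_
      left_lin := ?_
      dist_ge := ?_
      collision_rule := ?_
      free := ?_
      free_vr := ?_
      free_vl := ?_
      low := ?_
      events_spec := ?_
      card_events := by simpa using S.card_events }⟩⟩
  · intro i t
    cases i using Fin.cases with
    | zero => exact ⟨1, one_pos, fun s _ => by simp only [Fin.cons_zero]; module⟩
    | succ i => simpa using S.right_lin i t
  · intro i t
    cases i using Fin.cases with
    | zero => exact ⟨1, one_pos, fun s _ => by simp only [Fin.cons_zero]; module⟩
    | succ i => simpa using S.left_lin i t
  · intro i j hij t ht
    cases i using Fin.cases with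
    | zero =>
      cases j using Fin.cases with
      | zero => exact absurd rfl hij
      | succ j => rw [norm_sub_rev]; simpa using (far j t ht).le
    | succ i =>
      cases j using Fin.cases with
      | zero => simpa using (far i t ht).le
      | succ j => simpa using S.dist_ge i j (fun h => hij (by rw [h])) t ht
  · intro i t hi
    cases i using Fin.cases with
    | zero => simp at hi
    | succ i =>
      simp only [Fin.cons_succ] at hi ⊢
      have ht : t ≤ t₀ := by
        by_contra! h
        exact hi ((S.free_vr i t h.le).trans (S.free_vl i t h).symm)
      obtain ⟨j, hji, h1, h2, h3, h4, h5, h6⟩ := S.collision_rule i t hi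
      refine ⟨j.succ, by simpa using hji, by simpa using h1, by simpa using h2, ?_, ?_,
        by simpa using h5, by simpa using h6⟩
      · intro k hk hk2
        cases k using Fin.cases with
        | zero => exact absurd hk2 (far i t ht).ne'
        | succ k => rw [h3 k (by simpa using hk) (by simpa using hk2)]
      · intro k hk hk2
        cases k using Fin.cases with
        | zero => rfl
        | succ k => simpa using h4 k (by simpa using hk) (by simpa using hk2)
  · intro i t ht
    cases i using Fin.cases with
    | zero => simp
    | succ i => simpa [ha i i.2, hv i i.2] using S.free i t ht
  · intro i t ht
    cases i using Fin.cases with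
    | zero => simp
    | succ i => simpa [hv i i.2] using S.free_vr i t ht
  · intro i t ht
    cases i using Fin.cases with
    | zero => simp
    | succ i => simpa [hv i i.2] using S.free_vl i t ht
  · intro i t ht
    cases i using Fin.cases with
    | zero =>
      have := le_max_right (A + (B' - B) * t₀) (B' * t₀ - ⟪a' 0 + t₀ • v' 0, e⟫)
      simp only [Fin.cons_zero, inner_add_left, real_inner_smul_left] at this ⊢
      nlinarith
    | succ i =>
      have := le_max_left (A + (B' - B) * t₀) (B' * t₀ - ⟪a' 0 + t₀ • v' 0, e⟫)
      have := S.low i t ht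
      simp only [Fin.cons_succ]
      nlinarith
  · intro p hp
    obtain ⟨p, hpS, rfl⟩ := Finset.mem_map.1 hp
    obtain ⟨ht, i, j, hij, h1, h2, h3, h4⟩ := S.events_spec p hpS
    refine ⟨ht, i.succ, j.succ, by simpa using hij, ?_, by simpa using h2, by simpa using h3,
      by simpa using h4⟩
    simp [h1]

/-- Prolonging a partial system by a free flight that ends with a collision of the balls `i` and
`j`. -/
theorem PartialSystem.exists_collide {e : E} {n N : ℕ} {B A t₀ t₁ : ℝ} {a v a' v' : ℕ → E} {u : E}
    (S : PartialSystem e n B A N t₀ a v) (ht : t₀ < t₁) {i j : ℕ} (hi : i < n) (hj : j < n)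
    (hij : i ≠ j) (hu : ‖u‖ = 1) (hcontact : a j + t₁ • v j - (a i + t₁ • v i) = (2 : ℝ) • u)
    (happroach : 0 < ⟪v i - v j, u⟫)
    (hvi : v' i = v i - ⟪v i - v j, u⟫ • u) (hvj : v' j = v j + ⟪v i - v j, u⟫ • u)
    (hv : ∀ k < n, k ≠ i → k ≠ j → v' k = v k)
    (ha : ∀ k < n, a' k + t₁ • v' k = a k + t₁ • v k)
    (hsep : ∀ k < n, ∀ l < n, k < l → ∀ t ∈ Set.Icc t₀ t₁,
      2 ≤ ‖a l + t • v l - (a k + t • v k)‖)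
    (hstrict : ∀ k < n, k ≠ i → k ≠ j →
      2 < ‖a k + t₁ • v k - (a i + t₁ • v i)‖ ∧ 2 < ‖a k + t₁ • v k - (a j + t₁ • v j)‖) :
    ∃ A', Nonempty (PartialSystem e n B A' (N + 1) t₁ a' v') := by
  obtain ⟨A', hA'⟩ := Finite.exists_le fun i : Fin n => B * t₁ - ⟪a i + t₁ • v i, e⟫
  have hfree : ∀ k : Fin n, S.x k t₁ = a k + t₁ • v k := fun k => S.free k t₁ ht.le
  have hu0 : u ≠ 0 := by
    rintro rfl
    simp at hu
  have hnorm : ‖(2 : ℝ) • u‖ = 2 := by rw [norm_smul, hu]; norm_num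
  have hvi' : v' i ≠ v i := by
    rw [hvi, Ne, sub_eq_self]
    exact smul_ne_zero happroach.ne' hu0
  have hvj' : v' j ≠ v j := by
    rw [hvj, Ne, add_eq_left]
    exact smul_ne_zero happroach.ne' hu0
  set X : Fin n → ℝ → E := fun k t => if t ≤ t₁ then S.x k t else a' k + t • v' k
  set VR : Fin n → ℝ → E := fun k t => if t < t₁ then S.vr k t else v' k
  set VL : Fin n → ℝ → E := fun k t => if t ≤ t₁ then S.vl k t else v' k
  have X_le : ∀ k, ∀ t ≤ t₁, X k t = S.x k t := fun k t h => if_pos h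
  have X_ge : ∀ k, ∀ t ≥ t₁, X k t = a' k + t • v' k := by
    intro k t h
    rcases h.eq_or_lt with rfl | h
    · rw [X_le k _ le_rfl, hfree, ha k k.2]
    · exact if_neg h.not_ge
  have VR_lt : ∀ k, ∀ t < t₁, VR k t = S.vr k t := fun k t h => if_pos h
  have VR_ge : ∀ k, ∀ t ≥ t₁, VR k t = v' k := fun k t h => if_neg h.not_gt
  have VL_le : ∀ k, ∀ t ≤ t₁, VL k t = S.vl k t := fun k t h => if_pos h
  have VL_gt : ∀ k, ∀ t > t₁, VL k t = v' k := fun k t h => if_neg h.not_ge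
  have VL_eq : ∀ k, VL k t₁ = v k := fun k => (VL_le k t₁ le_rfl).trans (S.free_vl k t₁ ht)
  have VR_eq : ∀ k, VR k t₁ = v' k := fun k => VR_ge k t₁ le_rfl
  have X_eq : ∀ k, X k t₁ = a k + t₁ • v k := fun k => (X_le k t₁ le_rfl).trans (hfree k)
  have hxij : X ⟨j, hj⟩ t₁ - X ⟨i, hi⟩ t₁ = (2 : ℝ) • u := by rw [X_eq, X_eq]; exact hcontact
  have hxij' : X ⟨i, hi⟩ t₁ - X ⟨j, hj⟩ t₁ = (-2 : ℝ) • u := by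
    rw [← neg_sub, hxij, neg_smul]
  have hnorm' : ‖(-2 : ℝ) • u‖ = 2 := by rw [neg_smul, norm_neg, hnorm]
  have half : (2⁻¹ : ℝ) • ((2 : ℝ) • u) = u := by rw [smul_smul]; norm_num
  have half' : (2⁻¹ : ℝ) • ((-2 : ℝ) • u) = -u := by rw [smul_smul]; norm_num
  refine ⟨max A A', ⟨
    { x := X
      vr := VR
      vl := VL
      events := insert (t₁, {⟨i, hi⟩, ⟨j, hj⟩}) S.events
      right_lin := ?_
      left_lin := ?_
      dist_ge := ?_
      collision_rule := ?_
      free := X_ge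
      free_vr := VR_ge
      free_vl := VL_gt
      low := ?_
      events_spec := ?_
      card_events := ?_ }⟩⟩
  · intro k t
    rcases lt_or_ge t t₁ with h | h
    · obtain ⟨ε, hε, H⟩ := S.right_lin k t
      refine ⟨min ε (t₁ - t), lt_min hε (sub_pos.2 h), fun s hs => ?_⟩
      have h1 := hs.2.trans (add_le_add_right (min_le_left _ _) t)
      have h2 := hs.2.trans (add_le_add_right (min_le_right _ _) t)
      rw [X_le k s (by linarith), X_le k t h.le, VR_lt k t h, H s ⟨hs.1, h1⟩]
    · refine ⟨1, one_pos, fun s hs => ?_⟩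
      rw [X_ge k s (h.trans hs.1), X_ge k t h, VR_ge k t h]
      module
  · intro k t
    rcases lt_or_ge t₁ t with h | h
    · refine ⟨t - t₁, sub_pos.2 h, fun s hs => ?_⟩
      rw [X_ge k s (by linarith [hs.1]), X_ge k t h.le, VL_gt k t h]
      module
    · obtain ⟨ε, hε, H⟩ := S.left_lin k t
      refine ⟨ε, hε, fun s hs => ?_⟩
      rw [X_le k s (hs.2.trans h), X_le k t h, VL_le k t h, H s hs]
  · intro k l hkl t h
    rw [X_le k t h, X_le l t h]
    rcases le_or_gt t t₀ with h' | h'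
    · exact S.dist_ge k l hkl t h'
    · rw [S.free k t h'.le, S.free l t h'.le]
      rcases lt_or_gt_of_ne (Fin.val_ne_of_ne hkl) with h2 | h2
      · rw [norm_sub_rev]
        exact hsep k k.2 l l.2 h2 t ⟨h'.le, h⟩
      · exact hsep l l.2 k k.2 h2 t ⟨h'.le, h⟩
  · intro k t hk
    rcases lt_trichotomy t t₁ with h | rfl | h
    · simp only [VR_lt _ t h, VL_le _ t h.le, X_le _ t h.le] at hk ⊢
      exact S.collision_rule k t hk
    · simp only [VL_eq, VR_eq] at hk ⊢
      by_cases hki : (k : ℕ) = i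
      · obtain rfl : k = ⟨i, hi⟩ := Fin.ext hki
        refine ⟨⟨j, hj⟩, fun h => hij (Fin.val_eq_of_eq h).symm, ?_, hvj', ?_, ?_, ?_, ?_⟩
        · rw [hxij', hnorm']
        · intro l hl hl2
          by_contra hlj
          have := (hstrict l l.2 (fun h => hl (Fin.ext h)) (fun h => hlj (Fin.ext h))).1
          rw [norm_sub_rev, X_eq, X_eq] at hl2
          exact this.ne' hl2
        · exact fun l hl hlj => hv l l.2 (fun h => hl (Fin.ext h)) (fun h => hlj (Fin.ext h))
        · rw [hxij', half']
          change v' i = v i - ⟪v i - v j, -u⟫ • -u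
          rw [hvi, inner_neg_right, smul_neg, neg_smul, neg_neg]
        · rw [hxij', half']
          change v' j = v j + ⟪v i - v j, -u⟫ • -u
          rw [hvj, inner_neg_right, smul_neg, neg_smul, neg_neg]
      · by_cases hkj : (k : ℕ) = j
        · obtain rfl : k = ⟨j, hj⟩ := Fin.ext hkj
          have hswap : ⟪v j - v i, u⟫ = -⟪v i - v j, u⟫ := by
            rw [← neg_sub, inner_neg_left]
          refine ⟨⟨i, hi⟩, fun h => hij (Fin.val_eq_of_eq h), ?_, hvi', ?_, ?_, ?_, ?_⟩
          · rw [hxij, hnorm]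
          · intro l hl hl2
            by_contra hlj
            have := (hstrict l l.2 (fun h => hlj (Fin.ext h)) (fun h => hl (Fin.ext h))).2
            rw [norm_sub_rev, X_eq, X_eq] at hl2
            exact this.ne' hl2
          · exact fun l hl hlj => hv l l.2 (fun h => hlj (Fin.ext h)) (fun h => hl (Fin.ext h))
          · rw [hxij, half]
            change v' j = v j - ⟪v j - v i, u⟫ • u
            rw [hvj, hswap, neg_smul, sub_neg_eq_add]
          · rw [hxij, half]
            change v' i = v i + ⟪v j - v i, u⟫ • u
            rw [hvi, hswap, neg_smul, sub_eq_add_neg]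
        · exact absurd (hv k k.2 hki hkj) hk
    · rw [VR_ge k t h.le, VL_gt k t h] at hk
      exact absurd rfl hk
  · intro k t h
    rw [X_le k t h]
    rcases le_or_gt t t₀ with h' | h'
    · linarith [S.low k t h', le_max_left A A']
    · have h1 := S.low k t₀ le_rfl
      have h2 := hA' k
      rw [S.free k t₀ le_rfl] at h1
      rw [S.free k t h'.le]
      simp only [inner_add_left, real_inner_smul_left] at h1 h2 ⊢
      have h3 := le_max_left A A'
      have h4 := le_max_right A A'
      by_contra! hlt
      nlinarith
  · intro p hp
    rcases Finset.mem_insert.1 hp with rfl | hp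
    · refine ⟨le_rfl, ⟨i, hi⟩, ⟨j, hj⟩, fun h => hij (Fin.val_eq_of_eq h), rfl, ?_, ?_, ?_⟩
      · rw [hxij', hnorm']
      · rw [VR_eq, VL_eq]
        exact hvi'
      · rw [VR_eq, VL_eq]
        exact hvj'
    · obtain ⟨h, k, l, hkl⟩ := S.events_spec p hp
      have h' := h.trans_lt ht
      refine ⟨h'.le, k, l, ?_⟩
      rwa [X_le k _ h'.le, X_le l _ h'.le, VR_lt k _ h', VR_lt l _ h', VL_le k _ h'.le,
        VL_le l _ h'.le]
  · rw [Finset.card_insert_of_notMem]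
    · exact Nat.succ_le_succ S.card_events
    · intro h
      exact ht.not_ge (S.events_spec _ h).1

/-- A partial system whose final free flight never leads to an overlap is a system on `ℝ`. -/
theorem PartialSystem.exists_ballSystem {d n N : ℕ} {e : EuclideanSpace ℝ (Fin d)} {B A t₀ : ℝ}
    {a v : ℕ → EuclideanSpace ℝ (Fin d)} (S : PartialSystem e n B A N t₀ a v)
    (hsep : ∀ i < n, ∀ j < n, i < j → ∀ t ≥ t₀, 2 ≤ ‖a j + t • v j - (a i + t • v i)‖) :
    ∃ S : BallSystem (Fin n) d Set.univ, ∃ F : Finset (ℝ × Finset (Fin n)),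
      ↑F ⊆ S.collisions ∧ N ≤ F.card := by
  refine ⟨
    { x := S.x
      vr := S.vr
      vl := S.vl
      right_lin := fun i t _ => by simpa using S.right_lin i t
      left_lin := fun i t _ => by simpa using S.left_lin i t
      dist_ge := ?_
      collision_rule := fun i t _ _ h => S.collision_rule i t h }, S.events, ?_, S.card_events⟩
  · intro i j hij t _
    rcases le_or_gt t t₀ with h | h
    · exact S.dist_ge i j hij t h
    · rw [S.free i t h.le, S.free j t h.le]
      rcases lt_or_gt_of_ne (Fin.val_ne_of_ne hij) with h2 | h2
      · rw [norm_sub_rev]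
        exact hsep i i.2 j j.2 h2 t h.le
      · exact hsep j j.2 i i.2 h2 t h.le
  · intro p hp
    obtain ⟨_, h⟩ := S.events_spec p hp
    exact ⟨trivial, ⟨p.1 - 1, trivial, by linarith⟩, h⟩

end PartialSystems

section Relay

/-- The `i`-th entry of the list that starts with `post 0, …, post (K - 1), proj K` and continues
with `pre K, pre (K + 1), …`. -/
def phaseLine {α : Type*} (pre proj post : ℕ → α) (K i : ℕ) : α :=
  if i < K then post i else if i = K then proj K else pre (i - 1)

theorem phaseLine_of_lt {α : Type*} (pre proj post : ℕ → α) {K i : ℕ} (h : i < K) :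
    phaseLine pre proj post K i = post i := if_pos h

theorem phaseLine_self {α : Type*} (pre proj post : ℕ → α) (K : ℕ) :
    phaseLine pre proj post K K = proj K := by simp [phaseLine]

theorem phaseLine_add_one {α : Type*} (pre proj post : ℕ → α) {K i : ℕ} (h : K ≤ i) :
    phaseLine pre proj post K (i + 1) = pre i := by
  rw [phaseLine, if_neg (by omega), if_neg (by omega), Nat.add_sub_cancel]

variable {E : Type*} [NormedAddCommGroup E] [InnerProductSpace ℝ E]

/-- The distance to the origin is at least `2` as long as one moves away from it. -/
theorem two_le_norm_add_smul {d r : E} {σ : ℝ} (hd : 2 ≤ ‖d‖) (hr : 0 ≤ ⟪d, r⟫) (hσ : 0 ≤ σ) :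
    2 ≤ ‖d + σ • r‖ := by
  have h := norm_add_sq_real d (σ • r)
  rw [inner_smul_right] at h
  have := mul_nonneg hσ hr
  nlinarith [norm_nonneg (d + σ • r), sq_nonneg ‖σ • r‖]

theorem two_lt_norm_of_inner {d e : E} (he : ‖e‖ = 1) (h : 2 < ⟪d, e⟫) : 2 < ‖d‖ := by
  have := real_inner_le_norm d e
  rw [he, mul_one] at this
  exact h.trans_le this

/-- On a line, a lower bound for a linear form holds between two points where it holds. -/
theorem two_le_norm_of_inner_endpoints {e p r : E} (he : ‖e‖ = 1) {s₁ s₂ t : ℝ}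
    (ht : t ∈ Set.Icc s₁ s₂) (h₁ : 2 < ⟪p + s₁ • r, e⟫) (h₂ : 2 < ⟪p + s₂ • r, e⟫) :
    2 ≤ ‖p + t • r‖ := by
  refine (two_lt_norm_of_inner he ?_).le
  simp only [inner_add_left, real_inner_smul_left] at *
  obtain ⟨h3, h4⟩ := ht
  rcases le_total 0 ⟪r, e⟫ with h | h <;> nlinarith

/-- A new ball `0` approaching a system of `n` balls from behind, hitting ball `0` of the system,
whose momentum is passed on from each ball to the next, leads to `n` additional collisions. -/
theorem PartialSystem.exists_relay {e : E} (he : ‖e‖ = 1) {n N : ℕ} (hn : 0 < n)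
    {B B' A t₀ : ℝ} {a v : ℕ → E} (S : PartialSystem e n B A N t₀ a v)
    (hfut : ∀ i < n, ∀ j < n, i < j → ∀ t ≥ t₀, 2 ≤ ‖a j + t • v j - (a i + t • v i)‖)
    {τ : ℕ → ℝ} {g w h q u : ℕ → E} (hτ0 : t₀ < τ 0) (hτ : ∀ k, k + 1 < n → τ k < τ (k + 1))
    (hBB : B ≤ B') (hB : B ≤ ⟪w 0, e⟫) (hB' : ⟪w 0, e⟫ ≤ B')
    (hg : ⟪g 0 + t₀ • w 0, e⟫ + 2 < B * t₀ - A)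
    (hu : ∀ k < n, ‖u k‖ = 1)
    (hcontact : ∀ k < n, a k + τ k • v k - (g k + τ k • w k) = (2 : ℝ) • u k)
    (hpost : ∀ k < n, h k + τ k • q k = g k + τ k • w k)
    (hproj : ∀ k < n, g (k + 1) + τ k • w (k + 1) = a k + τ k • v k)
    (happ : ∀ k < n, 0 < ⟪w k - v k, u k⟫)
    (hq : ∀ k < n, q k = w k - ⟪w k - v k, u k⟫ • u k)
    (hw : ∀ k < n, w (k + 1) = v k + ⟪w k - v k, u k⟫ • u k)
    (hgap : ∀ k < n, ∀ i j, i < j → j ≤ n → (i, j) ≠ (k, k + 1) →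
      2 < ⟪phaseLine a g h k j + τ k • phaseLine v w q k j -
        (phaseLine a g h k i + τ k • phaseLine v w q k i), e⟫)
    (hfin : ∀ i j, i < j → j ≤ n → (i, j) ≠ (n - 1, n) →
      0 ≤ ⟪phaseLine v w q n j - phaseLine v w q n i, e⟫) :
    (∃ A', Nonempty (PartialSystem e (n + 1) B' A' (N + n) (τ (n - 1)) (phaseLine a g h n)
      (phaseLine v w q n))) ∧
    ∀ i < n + 1, ∀ j < n + 1, i < j → ∀ t ≥ τ (n - 1),
      2 ≤ ‖phaseLine a g h n j + t • phaseLine v w q n j -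
        (phaseLine a g h n i + t • phaseLine v w q n i)‖ := by
  set X : ℕ → ℝ → ℕ → E := fun K t i => phaseLine a g h K i + t • phaseLine v w q K i with hX
  have agree : ∀ K < n, ∀ i, X (K + 1) (τ K) i = X K (τ K) i := by
    intro K hK i
    simp only [hX]
    rcases lt_trichotomy i K with hi | rfl | hi
    · simp only [phaseLine_of_lt _ _ _ hi, phaseLine_of_lt _ _ _ (hi.trans K.lt_succ_self)]
    · simp only [phaseLine_self, phaseLine_of_lt _ _ _ i.lt_succ_self]
      exact hpost i hK
    · obtain ⟨i, rfl⟩ : ∃ k, i = k + 1 := ⟨i - 1, by omega⟩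
      rcases (Nat.lt_succ_iff.1 hi).eq_or_lt with rfl | hi
      · simp only [phaseLine_self, phaseLine_add_one _ _ _ le_rfl]
        exact hproj K hK
      · simp only [phaseLine_add_one _ _ _ hi.le, phaseLine_add_one _ _ _ (Nat.succ_le_of_lt hi)]
  have line : ∀ K i j s t, X K t j - X K t i = X K s j - X K s i +
      (t - s) • (phaseLine v w q K j - phaseLine v w q K i) := by
    intro K i j s t
    simp only [hX]
    module
  have line0 : ∀ K i j t, X K t j - X K t i = phaseLine a g h K j - phaseLine a g h K i +
      t • (phaseLine v w q K j - phaseLine v w q K i) := by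
    intro K i j t
    simp only [hX]
    module
  have contact : ∀ K < n, X K (τ K) (K + 1) - X K (τ K) K = (2 : ℝ) • u K := by
    intro K hK
    simp only [hX, phaseLine_self, phaseLine_add_one _ _ _ le_rfl]
    exact hcontact K hK
  have norm_two : ∀ K < n, ‖(2 : ℝ) • u K‖ = 2 := by
    intro K hK
    rw [norm_smul, hu K hK]
    norm_num
  have before : ∀ K < n, ∀ t ≤ τ K, 2 ≤ ‖X K t (K + 1) - X K t K‖ := by
    intro K hK t ht
    have h1 := happ K hK
    rw [line K K (K + 1) (τ K), contact K hK, ← neg_sub, ← neg_sub (phaseLine v w q K K),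
      neg_smul_neg, phaseLine_self, phaseLine_add_one _ _ _ le_rfl]
    refine two_le_norm_add_smul (norm_two K hK).ge ?_ (sub_nonneg.2 ht)
    rw [real_inner_smul_left, real_inner_comm]
    positivity
  have after : ∀ K < n, ∀ t ≥ τ K, 2 ≤ ‖X (K + 1) t (K + 1) - X (K + 1) t K‖ := by
    intro K hK t ht
    have h1 := happ K hK
    rw [line (K + 1) K (K + 1) (τ K), agree K hK, agree K hK, contact K hK, phaseLine_self,
      phaseLine_of_lt _ _ _ K.lt_succ_self]
    refine two_le_norm_add_smul (norm_two K hK).ge ?_ (sub_nonneg.2 ht)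
    have h2 : ⟪u K, w (K + 1) - q K⟫ = ⟪w K - v K, u K⟫ := by
      rw [hw K hK, hq K hK, real_inner_comm]
      simp only [inner_add_left, inner_sub_left, real_inner_smul_left, real_inner_self_eq_norm_sq,
        hu K hK]
      ring
    rw [real_inner_smul_left, h2]
    positivity
  have gap : ∀ K < n, ∀ i j, i < j → j ≤ n → (i, j) ≠ (K, K + 1) →
      2 < ⟪X K (τ K) j - X K (τ K) i, e⟫ := hgap
  set θ : ℕ → ℝ := fun K => if K = 0 then t₀ else τ (K - 1) with hθ
  have θ_succ : ∀ K, θ (K + 1) = τ K := fun K => by simp [hθ]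
  have θ_zero : θ 0 = t₀ := by simp [hθ]
  have sep : ∀ K < n, ∀ i j, i < j → j ≤ n → ∀ t ∈ Set.Icc (θ K) (τ K),
      2 ≤ ‖X K t j - X K t i‖ := by
    intro K hK i j hij hj t ht
    by_cases h1 : (i, j) = (K, K + 1)
    · obtain ⟨rfl, rfl⟩ := Prod.mk.inj h1
      exact before i hK t ht.2
    have h2 := gap K hK i j hij hj h1
    rcases K with _ | K
    · obtain ⟨j, rfl⟩ : ∃ k, j = k + 1 := ⟨j - 1, by omega⟩
      rcases i with _ | i
      · rw [line0] at h2 ⊢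
        refine two_le_norm_of_inner_endpoints he ht ?_ h2
        rw [← line0, θ_zero]
        have h3 := S.low ⟨j, by omega⟩ t₀ le_rfl
        rw [S.free _ _ le_rfl] at h3
        simp only [hX, phaseLine_self, phaseLine_add_one _ _ _ j.zero_le]
        rw [inner_sub_left]
        linarith
      · simp only [hX, phaseLine_add_one _ _ _ (Nat.zero_le _)]
        exact hfut i (by omega) j (by omega) (by omega) t (θ_zero ▸ ht.1)
    · rw [θ_succ] at ht
      by_cases h3 : (i, j) = (K, K + 1)
      · obtain ⟨rfl, rfl⟩ := Prod.mk.inj h3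
        exact after i (by omega) t ht.1
      have h4 := gap K (by omega) i j hij hj h3
      rw [← agree K (by omega), ← agree K (by omega)] at h4
      rw [line0] at h2 h4 ⊢
      exact two_le_norm_of_inner_endpoints he ht h4 h2
  have θ_lt : ∀ K < n, θ K < τ K := by
    intro K hK
    rcases K with _ | K
    · rwa [θ_zero]
    · rw [θ_succ]
      exact hτ K hK
  have main : ∀ K ≤ n, ∃ A', Nonempty (PartialSystem e (n + 1) B' A' (N + K) (θ K)
      (phaseLine a g h K) (phaseLine v w q K)) := by
    intro K hK
    induction K with
    | zero =>
      rw [θ_zero]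
      exact S.exists_cons he (fun i _ => phaseLine_add_one _ _ _ i.zero_le)
        (fun i _ => phaseLine_add_one _ _ _ i.zero_le) hBB (by rwa [phaseLine_self])
        (by rwa [phaseLine_self]) (by rwa [phaseLine_self, phaseLine_self])
    | succ K ih =>
      obtain ⟨A', ⟨S'⟩⟩ := ih (by omega)
      rw [θ_succ, ← add_assoc]
      have hvK : phaseLine v w q K K = w K := phaseLine_self _ _ _ _
      have hvK' : phaseLine v w q K (K + 1) = v K := phaseLine_add_one _ _ _ le_rfl
      refine S'.exists_collide (θ_lt K hK) (i := K) (j := K + 1) (by omega) (by omega) (by omega)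
        (hu K hK) (contact K hK) ?_ ?_ ?_ ?_ ?_ ?_ ?_
      · rw [hvK, hvK']
        exact happ K hK
      · rw [hvK, hvK', phaseLine_of_lt _ _ _ K.lt_succ_self]
        exact hq K hK
      · rw [hvK, hvK', phaseLine_self]
        exact hw K hK
      · intro k hk hk1 hk2
        rcases lt_or_gt_of_ne hk1 with h1 | h1
        · rw [phaseLine_of_lt _ _ _ h1, phaseLine_of_lt _ _ _ (by omega)]
        · obtain ⟨k, rfl⟩ : ∃ l, k = l + 1 := ⟨k - 1, by omega⟩
          rw [phaseLine_add_one _ _ _ (by omega), phaseLine_add_one _ _ _ (by omega)]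
      · exact fun k _ => agree K hK k
      · exact fun k hk l hl hkl t ht => sep K hK k l hkl (by omega) t ht
      · intro k hk hk1 hk2
        have far : ∀ l, l ≤ n → l ≠ k → (k, l) ≠ (K, K + 1) → (l, k) ≠ (K, K + 1) →
            2 < ‖X K (τ K) k - X K (τ K) l‖ := by
          intro l hl hlk h1 h2
          rcases lt_or_gt_of_ne hlk with h3 | h3
          · exact two_lt_norm_of_inner he (gap K hK l k h3 (by omega) h2)
          · rw [norm_sub_rev]
            exact two_lt_norm_of_inner he (gap K hK k l h3 hl h1)
        exact ⟨far K (by omega) (Ne.symm hk1) (by simp [hk1]) (by simp [hk2]),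
          far (K + 1) (by omega) (Ne.symm hk2) (by simp [hk1]) (by simp)⟩
  obtain ⟨m, rfl⟩ : ∃ m, n = m + 1 := ⟨n - 1, by omega⟩
  refine ⟨θ_succ m ▸ main (m + 1) le_rfl, fun i hi j hj hij t ht => ?_⟩
  change 2 ≤ ‖X (m + 1) t j - X (m + 1) t i‖
  simp only [Nat.add_sub_cancel] at ht hfin
  by_cases h1 : (i, j) = (m, m + 1)
  · obtain ⟨rfl, rfl⟩ := Prod.mk.inj h1
    exact after i (by omega) t ht
  have h2 := gap m (by omega) i j hij (by omega) h1
  rw [← agree m (by omega), ← agree m (by omega)] at h2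
  rw [line (m + 1) i j (τ m)]
  refine (two_lt_norm_of_inner he ?_).le
  rw [inner_add_left, real_inner_smul_left]
  have := mul_nonneg (sub_nonneg.2 ht) (hfin i j hij (by omega) h1)
  linarith

end Relay

section RelayData

open Filter Topology

variable {E : Type*} [NormedAddCommGroup E] [InnerProductSpace ℝ E]

theorem exists_backward_recursion {σ : Type*} (p : ℕ) (F : ℕ → σ → σ) (z : σ) :
    ∃ g : ℕ → σ, g p = z ∧ ∀ k < p, g k = F k (g (k + 1)) := by
  induction p generalizing z with
  | zero => exact ⟨fun _ => z, rfl, by simp⟩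
  | succ p ih =>
    obtain ⟨g, hg, hF⟩ := ih (F p z)
    refine ⟨fun k => if k ≤ p then g k else z, by simp, fun k hk => ?_⟩
    rcases (Nat.lt_succ_iff.1 hk).eq_or_lt with rfl | hk'
    · simpa using hg
    · simpa [hk'.le, Nat.succ_le_of_lt hk'] using hF k hk'

theorem eventually_forall_lt {ι : Type*} {l : Filter ι} {n : ℕ} {P : ℕ → ι → Prop}
    (h : ∀ k < n, ∀ᶠ m in l, P k m) : ∀ᶠ m in l, ∀ k < n, P k m :=
  (eventually_all_finite (Set.finite_lt_nat n)).2 h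

theorem eventually_lt_of_tendsto_inv_mul {ι : Type*} {l : Filter ι} {T x : ι → ℝ} {ρ : ℝ}
    (hT : ∀ m, 0 < T m) (hT0 : Tendsto (fun m => (T m)⁻¹) l (𝓝 0))
    (hx : Tendsto (fun m => (T m)⁻¹ * x m) l (𝓝 ρ)) (hρ : 0 < ρ) (C : ℝ) :
    ∀ᶠ m in l, C < x m := by
  have h := hx.sub (hT0.mul_const C)
  rw [zero_mul, sub_zero] at h
  filter_upwards [h.eventually_const_lt hρ] with m hm
  rw [← mul_sub] at hm
  exact sub_pos.1 ((pos_iff_pos_of_mul_pos hm).1 (inv_pos.2 (hT m)))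

/-- Times `τ k`, normals `u k` and velocities `w k` for a momentum that is handed over along the
balls `0, …, p` moving along the lines `t ↦ a k + t • v k`, constructed backwards from the last
collision, which is central and takes place at the time `T`. -/
structure RelayData (e : E) (V T : ℝ) (p : ℕ) (a v : ℕ → E) (τ s : ℕ → ℝ) (u w : ℕ → E) :
    Prop where
  τ_last : τ p = T
  u_last : u p = e
  w_last : w (p + 1) = v p + (V - ⟪v p, e⟫) • e
  s_eq : ∀ k < p, s k = (⟪a (k + 1) - a k + τ (k + 1) • (v (k + 1) - v k), u (k + 1)⟫ - 2) /
    ⟪w (k + 2) - v k, u (k + 1)⟫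
  τ_eq : ∀ k < p, τ k = τ (k + 1) - s k
  w_eq : ∀ k < p, w (k + 1) = v k +
    (s k)⁻¹ • (a (k + 1) - a k + τ (k + 1) • (v (k + 1) - v k) - (2 : ℝ) • u (k + 1))
  u_eq : ∀ k < p, u k = ‖w (k + 1) - v k‖⁻¹ • (w (k + 1) - v k)
  w_zero : w 0 = w 1

theorem RelayData.exists (e : E) (V T : ℝ) (p : ℕ) (a v : ℕ → E) :
    ∃ τ s u w, RelayData e V T p a v τ s u w := by
  obtain ⟨s, hs⟩ : ∃ s : ℕ → ℝ × E × E → ℝ, ∀ k z, s k z =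
    (⟪a (k + 1) - a k + z.1 • (v (k + 1) - v k), z.2.1⟫ - 2) / ⟪z.2.2 - v k, z.2.1⟫ :=
    ⟨_, fun _ _ => rfl⟩
  obtain ⟨w, hw⟩ : ∃ w : ℕ → ℝ × E × E → E, ∀ k z, w k z = v k +
      (s k z)⁻¹ • (a (k + 1) - a k + z.1 • (v (k + 1) - v k) - (2 : ℝ) • z.2.1) :=
    ⟨_, fun _ _ => rfl⟩
  obtain ⟨G, hG, hGF⟩ := exists_backward_recursion p
    (fun k z => (z.1 - s k z, ‖w k z - v k‖⁻¹ • (w k z - v k), w k z))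
    (T, e, v p + (V - ⟪v p, e⟫) • e)
  refine ⟨fun k => (G k).1, fun k => s k (G (k + 1)), fun k => (G k).2.1,
    fun k => (G (k - 1)).2.2, ?_⟩
  constructor
  · simp [hG]
  · simp [hG]
  · simp [hG]
  · intro k _
    simp [hs]
  · intro k hk
    simp [hGF k hk]
  · intro k hk
    simp [hGF k hk, hw]
  · intro k hk
    simp [hGF k hk]
  · simp

theorem RelayData.tendsto {ι : Type*} {l : Filter ι} {e : E} (he : ‖e‖ = 1) {V : ℝ} {p : ℕ}
    {T : ι → ℝ} {a v : ι → ℕ → E} {τ s : ι → ℕ → ℝ} {u w : ι → ℕ → E} {c : ℕ → ℝ}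
    (D : ∀ m, RelayData e V (T m) p (a m) (v m) (τ m) (s m) (u m) (w m))
    (hT : ∀ m, 0 < T m) (hT0 : Tendsto (fun m => (T m)⁻¹) l (𝓝 0))
    (ha : ∀ k ≤ p, Tendsto (fun m => (T m)⁻¹ • a m k) l (𝓝 0))
    (hv : ∀ k ≤ p, Tendsto (fun m => v m k) l (𝓝 (c k • e)))
    (hc : ∀ k < p, c k < c (k + 1)) (hV : ∀ k ≤ p, c k < V) {k : ℕ} (hk : k ≤ p) :
    Tendsto (fun m => (T m)⁻¹ * τ m k) l (𝓝 ((V - c p) / (V - c k))) ∧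
    Tendsto (fun m => u m k) l (𝓝 e) ∧ Tendsto (fun m => w m (k + 1)) l (𝓝 (V • e)) ∧
    ∀ j, k = j + 1 → Tendsto (fun m => (T m)⁻¹ * s m j) l
      (𝓝 ((V - c p) / (V - c k) * (c k - c j) / (V - c j))) := by
  have hee : ⟪e, e⟫ = 1 := by rw [real_inner_self_eq_norm_sq, he, one_pow]
  have scaled : ∀ k ≤ p, ∀ j ≤ p, ∀ r, Tendsto (fun m => (T m)⁻¹ * τ m k) l (𝓝 r) →
      Tendsto (fun m => u m k) l (𝓝 e) →
      Tendsto (fun m => (T m)⁻¹ • (a m k - a m j + τ m k • (v m k - v m j) - (2 : ℝ) • u m k)) l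
        (𝓝 ((r * (c k - c j)) • e)) := by
    intro k hk j hj r h1 h2
    have h3 := (((ha k hk).sub (ha j hj)).add (h1.smul ((hv k hk).sub (hv j hj)))).sub
      (hT0.smul (h2.const_smul (2 : ℝ)))
    convert h3 using 2
    · module
    · module
  have scaled_inner : ∀ k ≤ p, ∀ j ≤ p, ∀ r, Tendsto (fun m => (T m)⁻¹ * τ m k) l (𝓝 r) →
      Tendsto (fun m => u m k) l (𝓝 e) →
      Tendsto (fun m => (T m)⁻¹ * (⟪a m k - a m j + τ m k • (v m k - v m j), u m k⟫ - 2)) l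
        (𝓝 (r * (c k - c j))) := by
    intro k hk j hj r h1 h2
    have h3 := ((((ha k hk).sub (ha j hj)).add (h1.smul ((hv k hk).sub (hv j hj)))).inner h2).sub
      (hT0.mul_const (2 : ℝ))
    convert h3 using 2
    · simp only [inner_add_left, inner_sub_left, real_inner_smul_left]
      ring
    · simp only [inner_add_left, inner_sub_left, real_inner_smul_left, inner_zero_left, hee]
      ring
  have time : ∀ k < p, ∀ r, Tendsto (fun m => (T m)⁻¹ * τ m (k + 1)) l (𝓝 r) →
      Tendsto (fun m => u m (k + 1)) l (𝓝 e) → Tendsto (fun m => w m (k + 2)) l (𝓝 (V • e)) →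
      Tendsto (fun m => (T m)⁻¹ * s m k) l (𝓝 (r * (c (k + 1) - c k) / (V - c k))) := by
    intro k hk r h1 h2 h3
    have h4 := scaled_inner (k + 1) hk k hk.le _ h1 h2
    have h5 := (h3.sub (hv k hk.le)).inner (𝕜 := ℝ) h2
    rw [← sub_smul, real_inner_smul_left, hee, mul_one] at h5
    refine (h4.div h5 (sub_pos.2 (hV k hk.le)).ne').congr fun m => ?_
    rw [Pi.div_apply, (D m).s_eq k hk, mul_div_assoc]
  suffices h : Tendsto (fun m => (T m)⁻¹ * τ m k) l (𝓝 ((V - c p) / (V - c k))) ∧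
      Tendsto (fun m => u m k) l (𝓝 e) ∧ Tendsto (fun m => w m (k + 1)) l (𝓝 (V • e)) by
    refine ⟨h.1, h.2.1, h.2.2, ?_⟩
    rintro j rfl
    exact time j hk _ h.1 h.2.1 h.2.2
  induction hk using Nat.decreasingInduction with
  | self =>
    refine ⟨?_, ?_, ?_⟩
    · rw [div_self (sub_pos.2 (hV p le_rfl)).ne']
      refine tendsto_const_nhds.congr fun m => ?_
      rw [(D m).τ_last, inv_mul_cancel₀ (hT m).ne']
    · exact tendsto_const_nhds.congr fun m => (D m).u_last.symm
    · have h1 := hv p le_rfl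
      have h2 := h1.add ((tendsto_const_nhds (x := V)).sub (h1.inner (𝕜 := ℝ)
        (tendsto_const_nhds (x := e))) |>.smul (tendsto_const_nhds (x := e)))
      rw [real_inner_smul_left, hee, mul_one, ← add_smul, add_sub_cancel] at h2
      exact h2.congr fun m => (D m).w_last.symm
  | of_succ k hk ih =>
    obtain ⟨h1, h2, h3⟩ := ih
    have hVk := sub_pos.2 (hV k hk.le)
    have hVk' := sub_pos.2 (hV (k + 1) hk)
    have hVp := sub_pos.2 (hV p le_rfl)
    have hck := sub_pos.2 (hc k hk)
    have h4 := time k hk _ h1 h2 h3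
    have h5 : Tendsto (fun m => w m (k + 1)) l (𝓝 (V • e)) := by
      have h6 := (hv k hk.le).add ((h4.inv₀ (by positivity)).smul
        (scaled (k + 1) hk k hk.le _ h1 h2))
      convert h6 using 2 with m
      · rw [(D m).w_eq k hk, smul_smul, mul_inv, inv_inv, mul_right_comm,
          mul_inv_cancel₀ (hT m).ne', one_mul]
      · rw [smul_smul, ← add_smul]
        congr 1
        field_simp
        ring
    refine ⟨?_, ?_, h5⟩
    · convert h1.sub h4 using 2 with m
      · rw [(D m).τ_eq k hk]
        ring
      · field_simp
        ring
    · have h6 := h5.sub (hv k hk.le)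
      rw [← sub_smul] at h6
      have h7 : ‖(V - c k) • e‖ = V - c k := by
        rw [norm_smul, he, mul_one, Real.norm_of_nonneg hVk.le]
      have h8 := (h6.norm.inv₀ (h7.symm ▸ hVk.ne')).smul h6
      rw [h7, smul_smul, inv_mul_cancel₀ hVk.ne', one_smul] at h8
      exact h8.congr fun m => ((D m).u_eq k hk).symm

end RelayData

section Aligned

open Filter Topology

variable {E : Type*} [NormedAddCommGroup E] [InnerProductSpace ℝ E]

theorem RelayData.spec {e : E} {V T : ℝ} {p : ℕ} {a v : ℕ → E} {τ s : ℕ → ℝ} {u w : ℕ → E}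
    (D : RelayData e V T p a v τ s u w) (he : ‖e‖ = 1) (hs : ∀ k < p, s k ≠ 0)
    (hμ : ∀ k < p, ⟪w (k + 2) - v k, u (k + 1)⟫ ≠ 0) (hw : ∀ k < p, w (k + 1) - v k ≠ 0)
    (hV : ⟪v p, e⟫ < V) {k : ℕ} (hk : k ≤ p) :
    ‖u k‖ = 1 ∧ 0 < ⟪w k - v k, u k⟫ ∧ w (k + 1) = v k + ⟪w k - v k, u k⟫ • u k := by
  obtain ⟨r, hr, hu, hwu⟩ : ∃ r : ℝ, 0 < r ∧ ‖u k‖ = 1 ∧ w (k + 1) = v k + r • u k := by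
    rcases hk.eq_or_lt with rfl | hk
    · exact ⟨_, sub_pos.2 hV, by rw [D.u_last, he], by rw [D.w_last, D.u_last]⟩
    · have h := norm_pos_iff.2 (hw k hk)
      refine ⟨_, h, ?_, ?_⟩
      · rw [D.u_eq k hk, norm_smul, norm_inv, norm_norm, inv_mul_cancel₀ h.ne']
      · rw [D.u_eq k hk, smul_smul, mul_inv_cancel₀ h.ne', one_smul, add_sub_cancel]
  have huu : ⟪u k, u k⟫ = 1 := by rw [real_inner_self_eq_norm_sq, hu, one_pow]
  have hin : ⟪w k, u k⟫ = ⟪w (k + 1), u k⟫ := by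
    rcases k with _ | k
    · rw [D.w_zero]
    · have h1 := D.s_eq k hk
      rw [eq_div_iff (hμ k hk)] at h1
      have h2 := hs k hk
      rw [inner_sub_left] at h1
      rw [D.w_eq k hk, inner_add_left, real_inner_smul_left, inner_sub_left,
        real_inner_smul_left, huu, mul_one, ← h1]
      field_simp
      ring
  have hr' : ⟪w k - v k, u k⟫ = r := by
    rw [inner_sub_left, hin, hwu, inner_add_left, real_inner_smul_left, huu]
    ring
  rw [hr']
  exact ⟨hu, hr, hwu⟩

theorem RelayData.contact {e : E} {V T : ℝ} {p : ℕ} {a v : ℕ → E} {τ s : ℕ → ℝ} {u w : ℕ → E}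
    (D : RelayData e V T p a v τ s u w) (hs : ∀ k < p, s k ≠ 0) {k : ℕ} (hk : k < p) :
    a (k + 1) + τ (k + 1) • v (k + 1) - (a k + τ k • v k - τ k • w (k + 1) +
      τ (k + 1) • w (k + 1)) = (2 : ℝ) • u (k + 1) := by
  have h1 : s k • w (k + 1) = s k • v k +
      (a (k + 1) - a k + τ (k + 1) • (v (k + 1) - v k) - (2 : ℝ) • u (k + 1)) := by
    rw [D.w_eq k hk, smul_add, smul_smul, mul_inv_cancel₀ (hs k hk), one_smul]
  have h2 : τ (k + 1) = τ k + s k := by rw [D.τ_eq k hk]; ring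
  rw [h2] at h1 ⊢
  have h3 : a (k + 1) + (τ k + s k) • v (k + 1) - (a k + τ k • v k - τ k • w (k + 1) +
      (τ k + s k) • w (k + 1)) = a (k + 1) + (τ k + s k) • v (k + 1) - (a k + τ k • v k +
      s k • w (k + 1)) := by module
  rw [h3, h1]
  module

/-- There are systems of `n` balls with at least `N` collisions whose final velocities are as
close as one likes to given distinct multiples of `e`. -/
def HasAlignedSystem (e : E) (n N : ℕ) : Prop :=
  ∃ (c : ℕ → ℝ) (B : ℝ), (∀ i j, i < j → j < n → c i < c j) ∧ ∀ δ > 0, ∃ A t a v,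
    Nonempty (PartialSystem e n B A N t a v) ∧ (∀ i < n, ‖v i - c i • e‖ < δ) ∧
    ∀ i < n, ∀ j < n, i < j → ∀ s ≥ t, 2 ≤ ‖a j + s • v j - (a i + s • v i)‖

theorem tendsto_inv_smul_of_norm_le {F : Type*} [NormedAddCommGroup F] [NormedSpace ℝ F]
    {R : ℕ → ℝ} {x : ℕ → F} (hR : ∀ m, 0 < R m) (hx : ∀ m, ‖x m‖ ≤ R m) :
    Tendsto (fun m : ℕ => (((m : ℝ) + 1) * R m)⁻¹ • x m) atTop (𝓝 0) := by
  refine squeeze_zero_norm (fun m => ?_) tendsto_one_div_add_atTop_nhds_zero_nat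
  have h := hR m
  rw [norm_smul, norm_inv, Real.norm_of_nonneg (by positivity), mul_inv, one_div, mul_assoc]
  refine mul_le_of_le_one_right (by positivity) ?_
  rw [inv_mul_le_iff₀ h, mul_one]
  exact hx m

theorem phaseLine_add_smul (t : ℝ) (a₀ a₁ a₂ v₀ v₁ v₂ : ℕ → E) (k i : ℕ) :
    phaseLine a₀ a₁ a₂ k i + t • phaseLine v₀ v₁ v₂ k i =
      phaseLine (fun i => a₀ i + t • v₀ i) (fun i => a₁ i + t • v₁ i) (fun i => a₂ i + t • v₂ i)
        k i := by
  unfold phaseLine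
  split_ifs <;> rfl

/-- An additional ball produces `n` additional collisions. -/
theorem HasAlignedSystem.succ {e : E} (he : ‖e‖ = 1) {p N : ℕ}
    (H : HasAlignedSystem e (p + 1) N) : HasAlignedSystem e (p + 2) (N + (p + 1)) := by
  obtain ⟨c, B, hc, H⟩ := H
  have hee : ⟪e, e⟫ = 1 := by rw [real_inner_self_eq_norm_sq, he, one_pow]
  set V : ℝ := max B (c p) + 1
  have hBV : B < V := (le_max_left _ _).trans_lt (lt_add_one _)
  have hV : ∀ k ≤ p, c k < V := by
    intro k hk
    refine lt_of_le_of_lt ?_ ((le_max_right B (c p)).trans_lt (lt_add_one _))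
    rcases hk.eq_or_lt with rfl | hk
    · rfl
    · exact (hc k p hk p.lt_succ_self).le
  have hδ : ∀ m : ℕ, (0 : ℝ) < 1 / ((m : ℝ) + 1) := fun m => by positivity
  choose A t a v S hva hfut using fun m : ℕ => H _ (hδ m)
  have hv : ∀ k ≤ p, Tendsto (fun m => v m k) atTop (𝓝 (c k • e)) := by
    intro k hk
    rw [tendsto_iff_norm_sub_tendsto_zero]
    exact squeeze_zero (fun _ => norm_nonneg _) (fun m => (hva m k (by omega)).le)
      tendsto_one_div_add_atTop_nhds_zero_nat
  set R : ℕ → ℝ := fun m => 1 + |A m| + |t m| + ∑ i ∈ Finset.range (p + 1), ‖a m i‖ with hRdef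
  have hR : ∀ m, 0 < R m := fun m => by positivity
  set T : ℕ → ℝ := fun m => ((m : ℝ) + 1) * R m
  have hT : ∀ m, 0 < T m := fun m => by have := hR m; positivity
  have hT0 : Tendsto (fun m => (T m)⁻¹) atTop (𝓝 0) := by
    have := tendsto_inv_smul_of_norm_le (x := fun _ => (1 : ℝ)) hR fun m => by
      have : 0 ≤ |A m| + |t m| + ∑ i ∈ Finset.range (p + 1), ‖a m i‖ := by positivity
      simp only [hRdef, norm_one]
      linarith
    simpa only [smul_eq_mul, mul_one] using this
  have hA0 : Tendsto (fun m => (T m)⁻¹ * A m) atTop (𝓝 0) :=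
    tendsto_inv_smul_of_norm_le hR fun m => by
      have : 0 ≤ 1 + |t m| + ∑ i ∈ Finset.range (p + 1), ‖a m i‖ := by positivity
      simp only [hRdef, Real.norm_eq_abs]
      linarith
  have ht0 : Tendsto (fun m => (T m)⁻¹ * t m) atTop (𝓝 0) :=
    tendsto_inv_smul_of_norm_le hR fun m => by
      have : 0 ≤ 1 + |A m| + ∑ i ∈ Finset.range (p + 1), ‖a m i‖ := by positivity
      simp only [hRdef, Real.norm_eq_abs]
      linarith
  have ha : ∀ k ≤ p, Tendsto (fun m => (T m)⁻¹ • a m k) atTop (𝓝 0) := fun k hk =>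
    tendsto_inv_smul_of_norm_le hR fun m => by
      have h1 : 0 ≤ 1 + |A m| + |t m| := by positivity
      have h2 := Finset.single_le_sum (f := fun i => ‖a m i‖) (fun i _ => norm_nonneg _)
        (Finset.mem_range.2 (Nat.lt_succ_of_le hk))
      simp only [hRdef] at h2 ⊢
      linarith
  choose τ s u w D using fun m => RelayData.exists e V (T m) p (a m) (v m)
  have lim := fun {k} (hk : k ≤ p) => RelayData.tendsto he D hT hT0 ha hv
    (fun k hk => hc k (k + 1) k.lt_succ_self (by omega)) hV hk
  set r : ℕ → ℝ := fun k => (V - c p) / (V - c k) with hr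
  have hr0 : ∀ k ≤ p, 0 < r k := fun k hk =>
    div_pos (sub_pos.2 (hV p le_rfl)) (sub_pos.2 (hV k hk))
  have limw : ∀ k ≤ p + 1, Tendsto (fun m => w m k) atTop (𝓝 (V • e)) := by
    intro k hk
    rcases k with _ | k
    · exact (lim p.zero_le).2.2.1.congr fun m => (D m).w_zero.symm
    · exact (lim (Nat.le_of_succ_le_succ hk)).2.2.1
  obtain ⟨q, hq⟩ : ∃ q : ℕ → ℕ → E, ∀ m k, q m k = w m k - ⟪w m k - v m k, u m k⟫ • u m k :=
    ⟨_, fun _ _ => rfl⟩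
  have limwv : ∀ k ≤ p, Tendsto (fun m => ⟪w m k - v m k, u m k⟫) atTop (𝓝 (V - c k)) := by
    intro k hk
    have h := ((limw k (by omega)).sub (hv k hk)).inner (𝕜 := ℝ) (lim hk).2.1
    rwa [← sub_smul, real_inner_smul_left, hee, mul_one] at h
  have limq : ∀ k ≤ p, Tendsto (fun m => q m k) atTop (𝓝 (c k • e)) := by
    intro k hk
    have h := (limw k (by omega)).sub ((limwv k hk).smul (lim hk).2.1)
    rw [← sub_smul, sub_sub_cancel] at h
    exact h.congr fun m => (hq m k).symm
  obtain ⟨g, hg0, hg⟩ : ∃ g : ℕ → ℕ → E,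
      (∀ m, g m 0 = a m 0 + τ m 0 • v m 0 - (2 : ℝ) • u m 0 - τ m 0 • w m 0) ∧
      ∀ m k, g m (k + 1) = a m k + τ m k • v m k - τ m k • w m (k + 1) :=
    ⟨fun m k => Nat.casesOn k (a m 0 + τ m 0 • v m 0 - (2 : ℝ) • u m 0 - τ m 0 • w m 0)
      fun k => a m k + τ m k • v m k - τ m k • w m (k + 1), fun _ => rfl, fun _ _ => rfl⟩
  obtain ⟨h, hh⟩ : ∃ h : ℕ → ℕ → E, ∀ m k, h m k = g m k + τ m k • w m k - τ m k • q m k :=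
    ⟨_, fun _ _ => rfl⟩
  have limcontact : ∀ k ≤ p, Tendsto
      (fun m => (T m)⁻¹ • (a m k + τ m k • v m k - (2 : ℝ) • u m k)) atTop
        (𝓝 ((r k * c k) • e)) := by
    intro k hk
    have h1 := ((ha k hk).add ((lim hk).1.smul (hv k hk))).sub
      (hT0.smul ((lim hk).2.1.const_smul (2 : ℝ)))
    convert h1 using 2
    · module
    · module
  have limpos : ∀ k ≤ p, ∀ i ≤ p + 1, Tendsto (fun m => (T m)⁻¹ •
      phaseLine (fun i => a m i + τ m k • v m i)
        (fun i => a m i + τ m i • v m i - (2 : ℝ) • u m i)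
        (fun i => a m i + τ m i • v m i - (2 : ℝ) • u m i + (τ m k - τ m i) • q m i) k i) atTop
      (𝓝 ((r k * phaseLine c c c k i) • e)) := by
    intro k hk i hi
    rcases lt_trichotomy i k with h1 | rfl | h1
    · simp only [phaseLine_of_lt _ _ _ h1]
      have h2 := (limcontact i (by omega)).add (((lim hk).1.sub (lim (k := i) (by omega)).1).smul
        (limq i (by omega)))
      convert h2 using 2
      · module
      · simp only [hr]
        module
    · simp only [phaseLine_self]
      exact limcontact i hk
    · obtain ⟨i, rfl⟩ : ∃ j, i = j + 1 := ⟨i - 1, by omega⟩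
      simp only [phaseLine_add_one _ _ _ (Nat.lt_succ_iff.1 h1)]
      have h2 := (ha i (by omega)).add ((lim hk).1.smul (hv i (by omega)))
      convert h2 using 2
      · module
      · module
  have mono : ∀ k ≤ p, ∀ i j, i < j → j ≤ p + 1 → (i, j) ≠ (k, k + 1) →
      phaseLine c c c k i < phaseLine c c c k j := by
    intro k hk i j hij hj hne
    have hne' : ¬(i = k ∧ j = k + 1) := fun h => hne (Prod.ext h.1 h.2)
    unfold phaseLine
    split_ifs <;> exact hc _ _ (by omega) (by omega)
  have limvel : ∀ i ≤ p + 1, Tendsto (fun m => phaseLine (v m) (w m) (q m) (p + 1) i) atTop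
      (𝓝 (phaseLine c (fun _ => V) c (p + 1) i • e)) := by
    intro i hi
    rcases hi.eq_or_lt with rfl | hi
    · simp only [phaseLine_self]
      exact limw _ le_rfl
    · simp only [phaseLine_of_lt _ _ _ hi]
      exact limq i (by omega)
  have mono' : ∀ i j, i < j → j < p + 2 →
      phaseLine c (fun _ => V) c (p + 1) i < phaseLine c (fun _ => V) c (p + 1) j := by
    intro i j hij hj
    rw [phaseLine_of_lt _ _ _ (by omega)]
    rcases (Nat.lt_succ_iff.1 hj).eq_or_lt with rfl | hj
    · rw [phaseLine_self]
      exact hV i (by omega)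
    · rw [phaseLine_of_lt _ _ _ hj]
      exact hc i j hij (by omega)
  refine ⟨phaseLine c (fun _ => V) c (p + 1), V + 1, mono', fun δ hδ => ?_⟩
  have limw0 : Tendsto (fun m => ⟪w m 0, e⟫) atTop (𝓝 V) := by
    have h1 := (limw 0 (by omega)).inner (𝕜 := ℝ) (tendsto_const_nhds (x := e))
    rwa [real_inner_smul_left, hee, mul_one] at h1
  have E1 := limw0.eventually_const_lt hBV
  have E2 := limw0.eventually_lt_const (lt_add_one V)
  have E3 : ∀ᶠ m in atTop, t m < τ m 0 := by
    have h1 := (lim p.zero_le).1.sub ht0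
    filter_upwards [eventually_lt_of_tendsto_inv_mul (x := fun m => τ m 0 - t m) hT hT0
      (h1.congr fun m => (mul_sub _ _ _).symm) (by simpa using hr0 0 p.zero_le) 0] with m hm
    exact sub_pos.1 hm
  have E4 : ∀ᶠ m in atTop, ∀ k < p, 0 < s m k := eventually_forall_lt fun k hk => by
    refine eventually_lt_of_tendsto_inv_mul hT hT0 ((lim (k := k + 1) hk).2.2.2 k rfl) ?_ 0
    exact div_pos (mul_pos (hr0 _ hk) (sub_pos.2 (hc k (k + 1) k.lt_succ_self (by omega))))
      (sub_pos.2 (hV k hk.le))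
  have E5 : ∀ᶠ m in atTop, ∀ k < p, ⟪w m (k + 2) - v m k, u m (k + 1)⟫ ≠ 0 :=
    eventually_forall_lt fun k hk => by
      have h1 := ((limw (k + 2) (by omega)).sub (hv k hk.le)).inner (𝕜 := ℝ)
        (lim (k := k + 1) hk).2.1
      rw [← sub_smul, real_inner_smul_left, hee, mul_one] at h1
      exact h1.eventually_ne (sub_pos.2 (hV k hk.le)).ne'
  have E6 : ∀ᶠ m in atTop, ∀ k < p, w m (k + 1) - v m k ≠ 0 :=
    eventually_forall_lt fun k hk => by
      have h1 := (limw (k + 1) (by omega)).sub (hv k hk.le)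
      rw [← sub_smul] at h1
      refine h1.eventually_ne (smul_ne_zero (sub_pos.2 (hV k hk.le)).ne' ?_)
      rintro rfl
      simp at he
  have E7 : ∀ᶠ m in atTop, ⟪v m p, e⟫ < V := by
    have h1 := (hv p le_rfl).inner (𝕜 := ℝ) (tendsto_const_nhds (x := e))
    rw [real_inner_smul_left, hee, mul_one] at h1
    exact h1.eventually_lt_const (hV p le_rfl)
  have E8 : ∀ᶠ m in atTop, ⟪g m 0 + t m • w m 0, e⟫ + 2 < B * t m - A m := by
    have h1 := (((ht0.const_mul B).sub hA0).sub ((limcontact 0 p.zero_le).inner (𝕜 := ℝ)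
      (tendsto_const_nhds (x := e)))).add (((lim p.zero_le).1.sub ht0).mul limw0)
    have h2 : Tendsto (fun m => (T m)⁻¹ * (B * t m - A m - ⟪g m 0 + t m • w m 0, e⟫)) atTop
        (𝓝 (r 0 * (V - c 0))) := by
      convert h1 using 2 with m
      · rw [hg0]
        simp only [inner_add_left, inner_sub_left, real_inner_smul_left]
        ring
      · rw [real_inner_smul_left, hee]
        simp only [hr]
        ring
    filter_upwards [eventually_lt_of_tendsto_inv_mul hT hT0 h2
      (mul_pos (hr0 0 p.zero_le) (sub_pos.2 (hV 0 p.zero_le))) 2] with m hm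
    linarith
  have E9 : ∀ᶠ m in atTop, ∀ k < p + 1, ∀ j < p + 2, ∀ i < j, (i, j) ≠ (k, k + 1) →
      2 < ⟪phaseLine (fun i => a m i + τ m k • v m i)
        (fun i => a m i + τ m i • v m i - (2 : ℝ) • u m i)
        (fun i => a m i + τ m i • v m i - (2 : ℝ) • u m i + (τ m k - τ m i) • q m i) k j -
        phaseLine (fun i => a m i + τ m k • v m i)
        (fun i => a m i + τ m i • v m i - (2 : ℝ) • u m i)
        (fun i => a m i + τ m i • v m i - (2 : ℝ) • u m i + (τ m k - τ m i) • q m i) k i, e⟫ :=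
    eventually_forall_lt fun k hk => eventually_forall_lt fun j hj =>
      eventually_forall_lt fun i hij => by
        by_cases hne : (i, j) = (k, k + 1)
        · exact Eventually.of_forall fun m h => absurd hne h
        have h1 := ((limpos k (by omega) j (by omega)).sub (limpos k (by omega) i
          (by omega))).inner (𝕜 := ℝ) (tendsto_const_nhds (x := e))
        rw [← sub_smul, real_inner_smul_left, hee, mul_one, ← mul_sub] at h1
        filter_upwards [eventually_lt_of_tendsto_inv_mul hT hT0 (h1.congr fun m => by
          rw [← smul_sub, real_inner_smul_left])
          (mul_pos (hr0 k (by omega)) (sub_pos.2 (mono k (by omega) i j hij (by omega) hne))) 2]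
        with m hm _
        exact hm
  have E10 : ∀ᶠ m in atTop, ∀ j < p + 2, ∀ i < j,
      0 < ⟪phaseLine (v m) (w m) (q m) (p + 1) j - phaseLine (v m) (w m) (q m) (p + 1) i, e⟫ :=
    eventually_forall_lt fun j hj => eventually_forall_lt fun i hij => by
      have h1 := ((limvel j (by omega)).sub (limvel i (by omega))).inner (𝕜 := ℝ)
        (tendsto_const_nhds (x := e))
      rw [← sub_smul, real_inner_smul_left, hee, mul_one] at h1
      exact h1.eventually_const_lt (sub_pos.2 (mono' i j hij hj))
  have E11 : ∀ᶠ m in atTop, ∀ i < p + 2,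
      ‖phaseLine (v m) (w m) (q m) (p + 1) i - phaseLine c (fun _ => V) c (p + 1) i • e‖ < δ :=
    eventually_forall_lt fun i hi =>
      (tendsto_iff_norm_sub_tendsto_zero.1 (limvel i (by omega))).eventually_lt_const hδ
  obtain ⟨m, h1, h2, h3, h4, h5, h6, h7, h8, h9, h10, h11⟩ := (E1.and (E2.and (E3.and (E4.and
    (E5.and (E6.and (E7.and (E8.and (E9.and (E10.and E11)))))))))).exists
  have hs : ∀ k < p, s m k ≠ 0 := fun k hk => (h4 k hk).ne'
  have spec := fun {k} (hk : k < p + 1) =>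
    (D m).spec he hs h5 h6 h7 (Nat.lt_succ_iff.1 hk)
  have contact : ∀ k < p + 1, a m k + τ m k • v m k - (g m k + τ m k • w m k) =
      (2 : ℝ) • u m k := by
    intro k hk
    rcases k with _ | k
    · rw [hg0]
      module
    · rw [hg]
      exact (D m).contact hs (by omega)
  obtain ⟨S'⟩ := S m
  obtain ⟨⟨A', hS'⟩, hfut'⟩ := S'.exists_relay he p.succ_pos (hfut m) (τ := τ m) (g := g m)
    (w := w m) (h := h m) (q := q m) (u := u m) (B' := V + 1) h3
    (fun k hk => by
      have := h4 k (by omega)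
      rw [(D m).τ_eq k (by omega)]
      linarith)
    (by linarith) h1.le h2.le h8 (fun k hk => (spec hk).1) contact
    (fun k _ => by rw [hh]; module) (fun k _ => by rw [hg]; module)
    (fun k hk => (spec hk).2.1) (fun k _ => hq m k) (fun k hk => (spec hk).2.2)
    (by
      intro k hk i j hij hj hne
      have key : ∀ i ≤ p + 1, phaseLine (a m) (g m) (h m) k i +
          τ m k • phaseLine (v m) (w m) (q m) k i = phaseLine (fun i => a m i + τ m k • v m i)
          (fun i => a m i + τ m i • v m i - (2 : ℝ) • u m i)
          (fun i => a m i + τ m i • v m i - (2 : ℝ) • u m i + (τ m k - τ m i) • q m i) k i := by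
        intro i hi
        rw [phaseLine_add_smul]
        rcases lt_trichotomy i k with hik | rfl | hik
        · rw [phaseLine_of_lt _ _ _ hik, phaseLine_of_lt _ _ _ hik, hh, ← contact i (by omega)]
          module
        · rw [phaseLine_self, phaseLine_self, ← contact i hk]
          module
        · obtain ⟨i, rfl⟩ : ∃ j, i = j + 1 := ⟨i - 1, by omega⟩
          rw [phaseLine_add_one _ _ _ (Nat.lt_succ_iff.1 hik),
            phaseLine_add_one _ _ _ (Nat.lt_succ_iff.1 hik)]
      rw [key i (by omega), key j hj]
      exact h9 k hk j (by omega) i hij hne)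
    (fun i j hij hj _ => (h10 j (by omega) i hij).le)
  exact ⟨A', τ m p, _, _, hS', h11, hfut'⟩

end Aligned

section ThreeBalls

variable {E : Type*} [NormedAddCommGroup E] [InnerProductSpace ℝ E]

/-- The vector with coordinates `x` and `y` with respect to `e` and `w`. -/
def planePoint (e w : E) (x y : ℝ) : E :=
  x • e + y • w

theorem planePoint_add (e w : E) (x y x' y' : ℝ) :
    planePoint e w x y + planePoint e w x' y' = planePoint e w (x + x') (y + y') := by
  simp only [planePoint]
  module

theorem planePoint_sub (e w : E) (x y x' y' : ℝ) :
    planePoint e w x y - planePoint e w x' y' = planePoint e w (x - x') (y - y') := by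
  simp only [planePoint]
  module

theorem smul_planePoint (e w : E) (r x y : ℝ) :
    r • planePoint e w x y = planePoint e w (r * x) (r * y) := by
  simp only [planePoint]
  module

theorem planePoint_congr (e w : E) {x y x' y' : ℝ} (hx : x = x') (hy : y = y') :
    planePoint e w x y = planePoint e w x' y' := by
  rw [hx, hy]

theorem inner_planePoint {e w : E} (he : ‖e‖ = 1) (hw : ‖w‖ = 1) (hew : ⟪e, w⟫ = 0)
    (x y x' y' : ℝ) : ⟪planePoint e w x y, planePoint e w x' y'⟫ = x * x' + y * y' := by
  have h : ⟪w, e⟫ = 0 := by rw [real_inner_comm, hew]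
  simp only [planePoint, inner_add_left, inner_add_right, real_inner_smul_left,
    real_inner_smul_right, real_inner_self_eq_norm_sq, he, hw, hew, h]
  ring

theorem norm_planePoint {e w : E} (he : ‖e‖ = 1) (hw : ‖w‖ = 1) (hew : ⟪e, w⟫ = 0) (x y : ℝ) :
    ‖planePoint e w x y‖ = √(x ^ 2 + y ^ 2) := by
  rw [norm_eq_sqrt_real_inner, inner_planePoint he hw hew, sq, sq]

/-- The sequence of vectors whose entries `0`, `1` and `k ≥ 2` have the given coordinates. -/
def planeTriple (e w : E) (x₀ y₀ x₁ y₁ x₂ y₂ : ℝ) : ℕ → E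
  | 0 => planePoint e w x₀ y₀
  | 1 => planePoint e w x₁ y₁
  | _ => planePoint e w x₂ y₂

theorem two_le_norm_planePoint {e w : E} (he : ‖e‖ = 1) (hw : ‖w‖ = 1) (hew : ⟪e, w⟫ = 0)
    {t x y x' y' a b a' b' : ℝ}
    (h : 4 ≤ (x' + t * a' - (x + t * a)) ^ 2 + (y' + t * b' - (y + t * b)) ^ 2) :
    2 ≤ ‖planePoint e w x' y' + t • planePoint e w a' b' -
      (planePoint e w x y + t • planePoint e w a b)‖ := by
  rw [smul_planePoint, smul_planePoint, planePoint_add, planePoint_add, planePoint_sub,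
    norm_planePoint he hw hew]
  apply Real.le_sqrt_of_sq_le
  linarith

theorem two_lt_norm_planePoint {e w : E} (he : ‖e‖ = 1) (hw : ‖w‖ = 1) (hew : ⟪e, w⟫ = 0)
    {t x y x' y' a b a' b' : ℝ}
    (h : 4 < (x' + t * a' - (x + t * a)) ^ 2 + (y' + t * b' - (y + t * b)) ^ 2) :
    2 < ‖planePoint e w x' y' + t • planePoint e w a' b' -
      (planePoint e w x y + t • planePoint e w a b)‖ := by
  rw [smul_planePoint, smul_planePoint, planePoint_add, planePoint_add, planePoint_sub,
    norm_planePoint he hw hew]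
  apply Real.lt_sqrt_of_sq_lt
  linarith

theorem two_le_norm_planeTriple {e w : E} (he : ‖e‖ = 1) (hw : ‖w‖ = 1) (hew : ⟪e, w⟫ = 0)
    {t x₀ y₀ x₁ y₁ x₂ y₂ a₀ b₀ a₁ b₁ a₂ b₂ : ℝ}
    (h₀₁ : 4 ≤ (x₁ + t * a₁ - (x₀ + t * a₀)) ^ 2 + (y₁ + t * b₁ - (y₀ + t * b₀)) ^ 2)
    (h₀₂ : 4 ≤ (x₂ + t * a₂ - (x₀ + t * a₀)) ^ 2 + (y₂ + t * b₂ - (y₀ + t * b₀)) ^ 2)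
    (h₁₂ : 4 ≤ (x₂ + t * a₂ - (x₁ + t * a₁)) ^ 2 + (y₂ + t * b₂ - (y₁ + t * b₁)) ^ 2)
    {i j : ℕ} (hi : i < 3) (hj : j < 3) (hij : i < j) :
    2 ≤ ‖planeTriple e w x₀ y₀ x₁ y₁ x₂ y₂ j + t • planeTriple e w a₀ b₀ a₁ b₁ a₂ b₂ j -
      (planeTriple e w x₀ y₀ x₁ y₁ x₂ y₂ i + t • planeTriple e w a₀ b₀ a₁ b₁ a₂ b₂ i)‖ := by
  obtain ⟨rfl, rfl⟩ | ⟨rfl, rfl⟩ | ⟨rfl, rfl⟩ :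
    (i = 0 ∧ j = 1) ∨ (i = 0 ∧ j = 2) ∨ (i = 1 ∧ j = 2) := by omega
  · exact two_le_norm_planePoint he hw hew h₀₁
  · exact two_le_norm_planePoint he hw hew h₀₂
  · exact two_le_norm_planePoint he hw hew h₁₂

theorem four_le_sq_add_sq {x y : ℝ} (h : y ≤ -2) : 4 ≤ x ^ 2 + y ^ 2 := by
  nlinarith [sq_nonneg x]

theorem four_lt_sq_add_sq {x y : ℝ} (h : 2 < y) : 4 < x ^ 2 + y ^ 2 := by
  nlinarith [sq_nonneg x]

theorem four_le_sq_add_sq_of_linear {x y x' y' r r' σ : ℝ} (h : 4 ≤ x ^ 2 + y ^ 2)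
    (hr : 0 ≤ x * r + y * r') (hσ : 0 ≤ σ) (hx : x' = x + σ * r) (hy : y' = y + σ * r') :
    4 ≤ x' ^ 2 + y' ^ 2 := by
  subst hx hy
  nlinarith [mul_nonneg hσ hr, sq_nonneg (σ * r), sq_nonneg (σ * r')]

/-- The first contact of the balls `1` and `2` in the configuration of three balls. -/
theorem exists_unit_contact : ∃ s p q : ℝ, 0.0782 < s ∧ s < 0.0784 ∧ p ^ 2 + q ^ 2 = 1 ∧
    2 * p = 36178 / 95625 - s * (160136 / 36125) ∧
    2 * q = 64382 / 31875 - s * (9264 / 36125) := by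
  obtain ⟨s, hs, h⟩ := intermediate_value_Icc' (a := (0.0782 : ℝ)) (b := 0.0784) (by norm_num)
    (f := fun s => (36178 / 95625 - s * (160136 / 36125)) ^ 2 +
      (64382 / 31875 - s * (9264 / 36125)) ^ 2) (by fun_prop)
    (show (4 : ℝ) ∈ _ by constructor <;> norm_num)
  have h' : (36178 / 95625 - s * (160136 / 36125)) ^ 2 +
      (64382 / 31875 - s * (9264 / 36125)) ^ 2 = 4 := h
  refine ⟨s, (36178 / 95625 - s * (160136 / 36125)) / 2,
    (64382 / 31875 - s * (9264 / 36125)) / 2, lt_of_le_of_ne hs.1 ?_, lt_of_le_of_ne hs.2 ?_,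
    ?_, ?_, ?_⟩
  · rintro rfl
    norm_num at h'
  · rintro rfl
    norm_num at h'
  · linarith
  · ring
  · ring

/-- The configuration of three balls up to its first collision, of the balls `1` and `2`. -/
theorem exists_partialSystem_three {e w : E} (he : ‖e‖ = 1) (hw : ‖w‖ = 1) (hew : ⟪e, w⟫ = 0) :
    ∃ s A : ℝ, 0 < s ∧
      (∀ t ≥ -s, 4 ≤ (36178 / 95625 + t * (160136 / 36125)) ^ 2 +
        (64382 / 31875 + t * (9264 / 36125)) ^ 2) ∧
      Nonempty (PartialSystem e 3 6 A 1 (-s)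
        (planeTriple e w 0 0 (3166 / 5625) (-7096 / 1875) (16 / 17) (-30 / 17))
        (planeTriple e w (86381 / 36125) (-30984 / 7225) (136 / 125) (252 / 125)
          (39888 / 7225) (82092 / 36125))) := by
  obtain ⟨s, p, q, hs, hs', hpq, hp, hq⟩ := exists_unit_contact
  obtain ⟨κ, hκ⟩ : ∃ κ, κ = p * (160136 / 36125) + q * (9264 / 36125) := ⟨_, rfl⟩
  have hs0 : -1 < -s := by linarith
  have hp0 : 0 < p := by linarith
  have hq0 : 0 < q := by linarith
  have hq1 : q < 1 := by nlinarith
  have hκ0 : 0 < κ := by linarith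
  have hκ1 : κ < 0.4 := by linarith
  have hκp : 0 < κ * p := mul_pos hκ0 hp0
  have hκq : 0 < κ * q := mul_pos hκ0 hq0
  have hκp' : κ * p < 0.4 := by nlinarith
  have hκq' : κ * q < 0.4 := by nlinarith
  have inner := inner_planePoint he hw hew
  have inner_e (x y : ℝ) : ⟪planePoint e w x y, e⟫ = x := by
    have h := inner x y 1 0
    simpa [planePoint] using h
  have norm_eq_one {x y : ℝ} (h : x ^ 2 + y ^ 2 = 1) : ‖planePoint e w x y‖ = 1 := by
    rw [norm_planePoint he hw hew, h, Real.sqrt_one]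
  have hsep {t : ℝ} (ht : t ≤ -s) {k l : ℕ} (hk : k < 3) (hl : l < 3) (hkl : k < l) :=
    two_le_norm_planeTriple he hw hew (t := t) (x₀ := 0) (y₀ := 0)
      (x₁ := 3166 / 5625 + s * (κ * p)) (y₁ := -7096 / 1875 + s * (κ * q))
      (x₂ := 16 / 17 - s * (κ * p)) (y₂ := -30 / 17 - s * (κ * q)) (a₀ := 86381 / 36125)
      (b₀ := -30984 / 7225) (a₁ := 136 / 125 + κ * p) (b₁ := 252 / 125 + κ * q)
      (a₂ := 39888 / 7225 - κ * p) (b₂ := 82092 / 36125 - κ * q)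
      (four_le_sq_add_sq (by linarith [mul_nonneg (sub_nonneg.2 ht) hκq.le]))
      (four_le_sq_add_sq (by
        nlinarith [mul_nonneg (sub_nonneg.2 ht) (sub_nonneg.2 hκq'.le)]))
      (four_le_sq_add_sq_of_linear (x := 2 * p) (y := 2 * q) (σ := -s - t)
        (r := 2 * (κ * p) - 160136 / 36125) (r' := 2 * (κ * q) - 9264 / 36125)
        (by linarith) (by nlinarith) (by linarith) (by linarith) (by linarith)) hk hl hkl
  obtain ⟨A, ⟨S⟩⟩ := PartialSystem.exists_of_free e (n := 3) (B := 6) (t₀ := -1)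
    (a := planeTriple e w 0 0 (3166 / 5625 + s * (κ * p)) (-7096 / 1875 + s * (κ * q))
      (16 / 17 - s * (κ * p)) (-30 / 17 - s * (κ * q)))
    (v := planeTriple e w (86381 / 36125) (-30984 / 7225) (136 / 125 + κ * p)
      (252 / 125 + κ * q) (39888 / 7225 - κ * p) (82092 / 36125 - κ * q))
    (by
      intro i hi
      interval_cases i <;> simp only [planeTriple, inner_e] <;> linarith)
    (fun k hk l hl hkl t ht => hsep (ht.trans hs0.le) hk hl hkl)
  refine ⟨s, ?_⟩
  suffices h : ∃ A, Nonempty (PartialSystem e 3 6 A 1 (-s) _ _) by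
    obtain ⟨A, hA⟩ := h
    refine ⟨A, by linarith, fun t ht => ?_, hA⟩
    exact four_le_sq_add_sq_of_linear (x := 2 * p) (y := 2 * q) (σ := t + s)
      (r := 160136 / 36125) (r' := 9264 / 36125)
      (by linarith) (by linarith) (by linarith) (by linarith) (by linarith)
  exact S.exists_collide (t₁ := -s) hs0 (i := 1) (j := 2) (by norm_num)
    (by norm_num) (by norm_num) (u := planePoint e w p q) (norm_eq_one hpq)
    (a' := planeTriple e w 0 0 (3166 / 5625) (-7096 / 1875) (16 / 17) (-30 / 17))
    (v' := planeTriple e w (86381 / 36125) (-30984 / 7225) (136 / 125) (252 / 125)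
      (39888 / 7225) (82092 / 36125))
    (by
      simp only [planeTriple, planePoint_add, planePoint_sub, smul_planePoint]
      apply planePoint_congr <;> linarith)
    (by
      simp only [planeTriple, planePoint_sub, inner]
      nlinarith)
    (by
      simp only [planeTriple, planePoint_sub, inner, smul_planePoint]
      apply planePoint_congr
      · linear_combination p * hκ + 2 * κ * p * hpq
      · linear_combination q * hκ + 2 * κ * q * hpq)
    (by
      simp only [planeTriple, planePoint_sub, planePoint_add, inner, smul_planePoint]
      apply planePoint_congr
      · linear_combination -p * hκ - 2 * κ * p * hpq
      · linear_combination -q * hκ - 2 * κ * q * hpq)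
    (by
      intro k hk hki hkj
      obtain rfl : k = 0 := by omega
      rfl)
    (by
      intro k hk
      interval_cases k <;> simp only [planeTriple, planePoint_add, smul_planePoint] <;>
        apply planePoint_congr <;> ring)
    (fun k hk l hl hkl t ht => hsep ht.2 hk hl hkl)
    (by
      intro k hk hki hkj
      obtain rfl : k = 0 := by omega
      exact ⟨two_lt_norm_planePoint he hw hew (four_lt_sq_add_sq (by nlinarith)),
        two_lt_norm_planePoint he hw hew (four_lt_sq_add_sq (by nlinarith))⟩)

/-- Three balls with the successive collisions `{1, 2}`, `{0, 2}`, `{1, 2}` and `{0, 1}`. -/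
theorem hasAlignedSystem_three {e w : E} (he : ‖e‖ = 1) (hw : ‖w‖ = 1) (hew : ⟪e, w⟫ = 0) :
    HasAlignedSystem e 3 4 := by
  obtain ⟨s, A, hs, hsep, ⟨S⟩⟩ := exists_partialSystem_three he hw hew
  have inner := inner_planePoint he hw hew
  have norm_eq_one {x y : ℝ} (h : x ^ 2 + y ^ 2 = 1) : ‖planePoint e w x y‖ = 1 := by
    rw [norm_planePoint he hw hew, h, Real.sqrt_one]
  obtain ⟨A, ⟨S⟩⟩ := S.exists_collide (t₁ := 0) (by linarith) (i := 0) (j := 2) (by norm_num)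
    (by norm_num) (by norm_num) (u := planePoint e w (8 / 17) (-15 / 17))
    (norm_eq_one (by norm_num))
    (a' := planeTriple e w 0 0 (3166 / 5625) (-7096 / 1875) (16 / 17) (-30 / 17))
    (v' := planeTriple e w (9 / 25) (-12 / 25) (136 / 125) (252 / 125) (944 / 125) (-192 / 125))
    (by
      simp only [planeTriple, planePoint_add, planePoint_sub, smul_planePoint]
      apply planePoint_congr <;> norm_num)
    (by
      simp only [planeTriple, planePoint_sub, inner]
      norm_num)
    (by
      simp only [planeTriple, planePoint_sub, inner, smul_planePoint]
      apply planePoint_congr <;> norm_num)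
    (by
      simp only [planeTriple, planePoint_sub, planePoint_add, inner, smul_planePoint]
      apply planePoint_congr <;> norm_num)
    (by
      intro k hk hki hkj
      obtain rfl : k = 1 := by omega
      rfl)
    (by
      intro k hk
      interval_cases k <;> simp only [planeTriple, planePoint_add, smul_planePoint] <;>
        apply planePoint_congr <;> norm_num)
    (by
      rintro k hk l hl hkl t ⟨ht, ht'⟩
      refine two_le_norm_planeTriple he hw hew ?_ ?_ ?_ hk hl hkl
      · exact four_le_sq_add_sq (by linarith)
      · exact four_le_sq_add_sq_of_linear (x := 16 / 17) (y := -30 / 17) (σ := 0 - t)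
          (r := -113059 / 36125) (r' := -237012 / 36125)
          (by norm_num) (by norm_num) (by linarith) (by ring) (by ring)
      · exact (hsep t ht).trans_eq (by ring))
    (by
      intro k hk hki hkj
      obtain rfl : k = 1 := by omega
      exact ⟨two_lt_norm_planePoint he hw hew (by norm_num),
        two_lt_norm_planePoint he hw hew (by norm_num)⟩)
  obtain ⟨A, ⟨S⟩⟩ := S.exists_collide (t₁ := 43 / 1530) (by norm_num) (i := 1) (j := 2)
    (by norm_num) (by norm_num) (by norm_num) (u := planePoint e w (7 / 25) (24 / 25))
    (norm_eq_one (by norm_num))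
    (a' := planeTriple e w 0 0 (6114 / 10625) (-39752 / 10625) (88796 / 95625) (-57626 / 31875))
    (v' := planeTriple e w (9 / 25) (-12 / 25) (16 / 25) (12 / 25) 8 0)
    (by
      simp only [planeTriple, planePoint_add, planePoint_sub, smul_planePoint]
      apply planePoint_congr <;> norm_num)
    (by
      simp only [planeTriple, planePoint_sub, inner]
      norm_num)
    (by
      simp only [planeTriple, planePoint_sub, inner, smul_planePoint]
      apply planePoint_congr <;> norm_num)
    (by
      simp only [planeTriple, planePoint_sub, planePoint_add, inner, smul_planePoint]
      apply planePoint_congr <;> norm_num)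
    (by
      intro k hk hki hkj
      obtain rfl : k = 0 := by omega
      rfl)
    (by
      intro k hk
      interval_cases k <;> simp only [planeTriple, planePoint_add, smul_planePoint] <;>
        apply planePoint_congr <;> norm_num)
    (by
      rintro k hk l hl hkl t ⟨ht, ht'⟩
      refine two_le_norm_planeTriple he hw hew ?_ ?_ ?_ hk hl hkl
      · exact four_le_sq_add_sq (by linarith)
      · exact four_le_sq_add_sq_of_linear (x := 16 / 17) (y := -30 / 17) (σ := t)
          (r := 899 / 125) (r' := -132 / 125)
          (by norm_num) (by norm_num) (by linarith) (by ring) (by ring)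
      · exact four_le_sq_add_sq_of_linear (x := 14 / 25) (y := 48 / 25) (σ := 43 / 1530 - t)
          (r := -808 / 125) (r' := 444 / 125)
          (by norm_num) (by norm_num) (by linarith) (by ring) (by ring))
    (by
      intro k hk hki hkj
      obtain rfl : k = 0 := by omega
      exact ⟨two_lt_norm_planePoint he hw hew (by norm_num),
        two_lt_norm_planePoint he hw hew (by norm_num)⟩)
  obtain ⟨A, ⟨S⟩⟩ := S.exists_collide (t₁ := 948 / 425) (by norm_num) (i := 0) (j := 1)
    (by norm_num) (by norm_num) (by norm_num) (u := planePoint e w (3 / 5) (-4 / 5))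
    (norm_eq_one (by norm_num))
    (a' := planeTriple e w (8532 / 10625) (-11376 / 10625) (-2418 / 10625) (-28376 / 10625)
      (88796 / 95625) (-57626 / 31875))
    (v' := planeTriple e w 0 0 1 0 8 0)
    (by
      simp only [planeTriple, planePoint_add, planePoint_sub, smul_planePoint]
      apply planePoint_congr <;> norm_num)
    (by
      simp only [planeTriple, planePoint_sub, inner]
      norm_num)
    (by
      simp only [planeTriple, planePoint_sub, inner, smul_planePoint]
      apply planePoint_congr <;> norm_num)
    (by
      simp only [planeTriple, planePoint_sub, planePoint_add, inner, smul_planePoint]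
      apply planePoint_congr <;> norm_num)
    (by
      intro k hk hki hkj
      obtain rfl : k = 2 := by omega
      rfl)
    (by
      intro k hk
      interval_cases k <;> simp only [planeTriple, planePoint_add, smul_planePoint] <;>
        apply planePoint_congr <;> norm_num)
    (by
      rintro k hk l hl hkl t ⟨ht, ht'⟩
      refine two_le_norm_planeTriple he hw hew ?_ ?_ ?_ hk hl hkl
      · exact four_le_sq_add_sq_of_linear (x := 6 / 5) (y := -8 / 5) (σ := 948 / 425 - t)
          (r := -7 / 25) (r' := -24 / 25)
          (by norm_num) (by norm_num) (by linarith) (by ring) (by ring)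
      · exact four_le_sq_add_sq_of_linear (x := 218657 / 191250) (y := -57196 / 31875)
          (σ := t - 43 / 1530) (r := 191 / 25) (r' := 12 / 25)
          (by norm_num) (by norm_num) (by linarith) (by ring) (by ring)
      · exact four_le_sq_add_sq_of_linear (x := 14 / 25) (y := 48 / 25) (σ := t - 43 / 1530)
          (r := 184 / 25) (r' := -12 / 25)
          (by norm_num) (by norm_num) (by linarith) (by ring) (by ring))
    (by
      intro k hk hki hkj
      obtain rfl : k = 2 := by omega
      exact ⟨two_lt_norm_planePoint he hw hew (by norm_num),
        two_lt_norm_planePoint he hw hew (by norm_num)⟩)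
  refine ⟨fun k => if k = 0 then 0 else if k = 1 then 1 else 8, 6, ?_, fun δ hδ =>
    ⟨A, _, _, _, ⟨S⟩, ?_, ?_⟩⟩
  · intro i j hij hj
    interval_cases j <;> interval_cases i <;> norm_num
  · intro i hi
    interval_cases i <;> simpa [planeTriple, planePoint] using hδ
  · intro k hk l hl hkl t ht
    refine two_le_norm_planeTriple he hw hew ?_ ?_ ?_ hk hl hkl
    · exact four_le_sq_add_sq_of_linear (x := 6 / 5) (y := -8 / 5) (σ := t - 948 / 425)
        (r := 1) (r' := 0)
        (by norm_num) (by norm_num) (by linarith) (by ring) (by ring)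
    · exact four_le_sq_add_sq_of_linear (x := 1718408 / 95625) (y := -23498 / 31875)
        (σ := t - 948 / 425) (r := 8) (r' := 0)
        (by norm_num) (by norm_num) (by linarith) (by ring) (by ring)
    · exact four_le_sq_add_sq_of_linear (x := 1603658 / 95625) (y := 27502 / 31875)
        (σ := t - 948 / 425) (r := 7) (r' := 0)
        (by norm_num) (by norm_num) (by linarith) (by ring) (by ring)

end ThreeBalls

theorem hasAlignedSystem_of_three {E : Type*} [NormedAddCommGroup E] [InnerProductSpace ℝ E]
    {e w : E} (he : ‖e‖ = 1) (hw : ‖w‖ = 1) (hew : ⟪e, w⟫ = 0) (p : ℕ) :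
    ∃ N, (p + 3) * (p + 2) < 2 * N ∧ HasAlignedSystem e (p + 3) N := by
  induction p with
  | zero => exact ⟨4, by norm_num, hasAlignedSystem_three he hw hew⟩
  | succ p ih =>
    obtain ⟨N, hN, h⟩ := ih
    refine ⟨N + (p + 3), by nlinarith, ?_⟩
    exact HasAlignedSystem.succ (p := p + 2) he h

/-- For every `n ≥ 3` and `d ≥ 2` there is an elastic collision system
of `n` unit balls in `ℝ^d`, on the time interval `ℝ`, with strictly more than
`n(n-1)/2` collisions. -/
theorem ball_collisions_gt_binom (n d : ℕ) (hn : 3 ≤ n) (hd : 2 ≤ d) :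
    ∃ S : BallSystem (Fin n) d Set.univ, ∃ F : Finset (ℝ × Finset (Fin n)),
      ↑F ⊆ S.collisions ∧ n * (n - 1) / 2 < F.card := by
  obtain ⟨p, rfl⟩ := Nat.exists_eq_add_of_le' hn
  have hew : ⟪(EuclideanSpace.single ⟨0, by omega⟩ 1 : EuclideanSpace ℝ (Fin d)),
      EuclideanSpace.single ⟨1, by omega⟩ 1⟫ = 0 := by
    simp [EuclideanSpace.inner_single_left]
  obtain ⟨N, hN, c, B, -, H⟩ := hasAlignedSystem_of_three (by simp) (by simp) hew p
  obtain ⟨A, t, a, v, ⟨S⟩, -, hsep⟩ := H 1 one_pos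
  obtain ⟨T, F, hF, hcard⟩ := S.exists_ballSystem hsep
  refine ⟨T, F, hF, lt_of_lt_of_le ?_ hcard⟩
  exact Nat.div_lt_of_lt_mul hN
end
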